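/- arXiv:1608.03861 — 8 statements merged into one kernel-verified Lean document; each statement's English description precedes it below -/
import Mathlib

section
/- For the FPGM-OPG iterates (GFPGM run with the FPGM-OPG parameters), for every N ≥ 3, min_{0 ≤ i ≤ N} ‖∇̃F(x_i)‖ ≤ min( min_{0 ≤ i ≤ N−1} ‖∇̃F(y_i)‖, ‖∇̃F(x_N)‖ ) ≤ 2√6 · L R / (N √(N − 2)). -/
open scoped RealInnerProductSpace

/-!
The proof is an energy argument. The proximal gradient inequality
`F (p y) + L/2 ‖p y - z‖² ≤ F z + L/2 ‖y - z‖²`, used at `z = x_i` with weight `T_{i-1}` and at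
`z = x_*` with weight `t_i`, makes the energy `T_{i-1} (F x_i - F x_*) + L/2 ‖u_i - x_*‖²` decrease
by at least `L/2 (T_i - t_i²) ‖y_i - p y_i‖²`, where
`u_i = x_0 + ∑_{l<i} t_l (x_{l+1} - y_l)`. As `F x_N - F x_* ≥ L/2 ‖x_N - p x_N‖²`, the square of
the smallest gradient mapping norm is at most `L² ‖x_0 - x_*‖²` divided by
`W_N = ∑_{i<N} (T_i - t_i²) + T_{N-1}`.

With `m = ⌈N/2⌉ - 1` and `T_i = t_i²` for `i ≤ m`, summation by parts turns this weight into
`(N - m) t_m² + ∑_{m<i<N} t_i (N + 1 - i - t_i)`. The choice `t_i = (N + 1 - i)/2` maximizes each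
term of the last sum, and `t_m ≥ (m + 2)/2` gives `W_N ≥ (N + 1)³/24`.

The gradient mapping norm at `x_{i+1} = p y_i` is at most the one at `y_i` because `p` is
nonexpansive: the gradient step is, by the Baillon–Haddad inequality, and the backward step is, by
monotonicity of the subdifferential of `φ`.
-/

namespace ProxGrad

/-! ### Smooth convex functions and the proximal gradient map -/

section NormedSpace

variable {E : Type*} [NormedAddCommGroup E] [NormedSpace ℝ E] {f h φ : E → ℝ}

lemma le_add_fderiv_of_isMinOn_add {s : Set E} {h' : E →L[ℝ] ℝ} {x z : E}
    (hφ : ConvexOn ℝ s φ) (hh : HasFDerivAt h h' x) (hmin : IsMinOn (fun w => h w + φ w) s x)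
    (hx : x ∈ s) (hz : z ∈ s) : φ x ≤ φ z + h' (z - x) := by
  let line := AffineMap.lineMap (k := ℝ) x z
  let g : ℝ → ℝ := fun r => h (line r) + r * (φ z - φ x)
  have hg : HasDerivAt g (h' (z - x) + 1 * (φ z - φ x)) 0 := by
    refine HasDerivAt.add ?_ ((hasDerivAt_id 0).mul_const _)
    exact HasFDerivAt.comp_hasDerivAt 0 (by simpa [line] using hh) AffineMap.hasDerivAt_lineMap
  have hg_min : IsMinOn g (Set.Icc 0 1) 0 := fun r hr => by
    have hmin_line : h x + φ x ≤ h (line r) + φ (line r) :=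
      hmin (hφ.1.lineMap_mem hx hz hr)
    have hφ_line : φ (line r) ≤ (1 - r) * φ x + r * φ z := by
      simpa [line, AffineMap.lineMap_apply_module] using
        hφ.2 hx hz (sub_nonneg.2 hr.2) hr.1 (sub_add_cancel 1 r)
    simp only [Set.mem_ofPred_eq, g, line, AffineMap.lineMap_apply_zero] at hmin_line hφ_line ⊢
    linarith
  have hdir : (1 : ℝ) ∈ posTangentConeAt (Set.Icc 0 1) 0 :=
    mem_posTangentConeAt_of_segment_subset (by simp [segment_eq_Icc])
  have hderiv : 0 ≤ (1 : ℝ) • (h' (z - x) + 1 * (φ z - φ x)) :=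
    hg_min.localize.hasFDerivWithinAt_nonneg hg.hasFDerivAt.hasFDerivWithinAt hdir
  rw [one_smul] at hderiv
  linarith

lemma add_fderiv_le_of_convexOn {s : Set E} {f' : E →L[ℝ] ℝ} {x z : E}
    (hf : ConvexOn ℝ s f) (hf' : HasFDerivAt f f' x) (hx : x ∈ s) (hz : z ∈ s) :
    f x + f' (z - x) ≤ f z := by
  -- Every point minimizes `-f + f = 0`.
  have h := le_add_fderiv_of_isMinOn_add hf hf'.neg (fun w _ => by simp) hx hz
  simp only [neg_apply] at h
  linarith

lemma le_add_fderiv_add_sq_of_lipschitz {L : ℝ} {f' : E → E →L[ℝ] ℝ}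
    (hf' : ∀ z, HasFDerivAt f (f' z) z) (hLip : ∀ u v, ‖f' u - f' v‖ ≤ L * ‖u - v‖) (x z : E) :
    f z ≤ f x + f' x (z - x) + L / 2 * ‖z - x‖ ^ 2 := by
  let line := AffineMap.lineMap (k := ℝ) x z
  have hline (r : ℝ) : HasDerivAt (fun r => f (line r)) (f' (line r) (z - x)) r :=
    (hf' _).comp_hasDerivAt r AffineMap.hasDerivAt_lineMap
  have hmajorant (r : ℝ) : HasDerivAt
      (fun r => f x + r * f' x (z - x) + L / 2 * ‖z - x‖ ^ 2 * r ^ 2)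
      (f' x (z - x) + L * ‖z - x‖ ^ 2 * r) r :=
    ((((hasDerivAt_id r).mul_const _).const_add _).add
      (((hasDerivAt_id r).pow 2).const_mul _)).congr_deriv (by simp; ring)
  have hbound : ∀ r ∈ Set.Ico (0 : ℝ) 1,
      f' (line r) (z - x) ≤ f' x (z - x) + L * ‖z - x‖ ^ 2 * r := fun r hr => by
    have hdist : ‖line r - x‖ = r * ‖z - x‖ := by
      simp [line, AffineMap.lineMap_apply_module', norm_smul, abs_of_nonneg hr.1]
    calc f' (line r) (z - x) = f' x (z - x) + (f' (line r) - f' x) (z - x) := by simp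
      _ ≤ f' x (z - x) + L * ‖line r - x‖ * ‖z - x‖ := by
        gcongr
        exact (le_abs_self _).trans (ContinuousLinearMap.le_of_opNorm_le _ (hLip _ _) _)
      _ = f' x (z - x) + L * ‖z - x‖ ^ 2 * r := by rw [hdist]; ring
  simpa [line] using image_le_of_deriv_right_le_deriv_boundary
    (fun r _ => (hline r).continuousAt.continuousWithinAt)
    (fun r _ => (hline r).hasDerivWithinAt) (by simp [line])
    (fun r _ => (hmajorant r).continuousAt.continuousWithinAt)
    (fun r _ => (hmajorant r).hasDerivWithinAt) hbound (Set.right_mem_Icc.2 zero_le_one)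

end NormedSpace

section InnerProductSpace

variable {E : Type*} [NormedAddCommGroup E] [InnerProductSpace ℝ E]
  {L : ℝ} {f φ : E → ℝ} {f' p : E → E}

/-- `f` is a convex function with `L`-Lipschitz gradient `f'` (Nesterov's class `𝓕_L^{1,1}`). The
gradient is encoded by `innerSL`, which, unlike `HasGradientAt`, does not need completeness. -/
structure IsSmoothConvex (L : ℝ) (f : E → ℝ) (f' : E → E) : Prop where
  convexOn : ConvexOn ℝ Set.univ f
  hasFDerivAt : ∀ z, HasFDerivAt f (innerSL ℝ (f' z)) z
  lipschitz : ∀ u v, ‖f' u - f' v‖ ≤ L * ‖u - v‖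

namespace IsSmoothConvex

lemma add_inner_le (hf : IsSmoothConvex L f f') (u v : E) : f u + ⟪f' u, v - u⟫ ≤ f v :=
  add_fderiv_le_of_convexOn hf.convexOn (hf.hasFDerivAt u) (Set.mem_univ u) (Set.mem_univ v)

lemma le_add_inner_add_sq (hf : IsSmoothConvex L f f') (u v : E) :
    f v ≤ f u + ⟪f' u, v - u⟫ + L / 2 * ‖v - u‖ ^ 2 :=
  le_add_fderiv_add_sq_of_lipschitz hf.hasFDerivAt
    (fun u v => by simpa only [← map_sub, innerSL_apply_norm] using hf.lipschitz u v) u v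

lemma add_inner_add_sq_norm_sub_le (hf : IsSmoothConvex L f f') (hL : 0 < L) (u v : E) :
    f u + ⟪f' u, v - u⟫ + (2 * L)⁻¹ * ‖f' v - f' u‖ ^ 2 ≤ f v := by
  -- A gradient step from `v` on `f - ⟪f' u, ·⟫`, which is minimal at `u`.
  set g := f' v - f' u with hg
  have hlower := hf.add_inner_le u (v - L⁻¹ • g)
  have hupper := hf.le_add_inner_add_sq v (v - L⁻¹ • g)
  rw [sub_right_comm, inner_sub_right, real_inner_smul_right] at hlower
  rw [sub_sub_cancel_left, inner_neg_right, real_inner_smul_right, norm_neg, norm_smul, mul_pow,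
    Real.norm_of_nonneg (inv_nonneg.2 hL.le)] at hupper
  have hinner : ⟪f' v, g⟫ - ⟪f' u, g⟫ = ‖g‖ ^ 2 := by
    rw [← inner_sub_left, ← hg, real_inner_self_eq_norm_sq]
  have hstep : L⁻¹ * ⟪f' v, g⟫ - L⁻¹ * ⟪f' u, g⟫ - L / 2 * (L⁻¹ ^ 2 * ‖g‖ ^ 2)
      = (2 * L)⁻¹ * ‖g‖ ^ 2 := by
    rw [← mul_sub, hinner]
    field_simp
    norm_num
  linarith

/-- The Baillon–Haddad inequality. -/
lemma sq_norm_sub_le_mul_inner (hf : IsSmoothConvex L f f') (hL : 0 < L) (u v : E) :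
    ‖f' u - f' v‖ ^ 2 ≤ L * ⟪f' u - f' v, u - v⟫ := by
  have huv := hf.add_inner_add_sq_norm_sub_le hL u v
  have hvu := hf.add_inner_add_sq_norm_sub_le hL v u
  rw [norm_sub_rev, ← neg_sub u v, inner_neg_right] at huv
  have hsum : L⁻¹ * ‖f' u - f' v‖ ^ 2 ≤ ⟪f' u - f' v, u - v⟫ := by
    rw [inner_sub_left]
    rw [mul_inv] at huv hvu
    linarith
  rwa [inv_mul_le_iff₀ hL] at hsum

lemma norm_smul_sub_sub_le (hf : IsSmoothConvex L f f') (hL : 0 < L) (u v : E) :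
    ‖L • (u - v) - (f' u - f' v)‖ ≤ L * ‖u - v‖ := by
  refine le_of_sq_le_sq ?_ (by positivity)
  have hcoc := hf.sq_norm_sub_le_mul_inner hL u v
  rw [norm_sub_sq_real, norm_smul, Real.norm_of_nonneg hL.le, real_inner_smul_left,
    real_inner_comm]
  linarith [sq_nonneg ‖f' u - f' v‖]

end IsSmoothConvex

/-- `p` is a proximal gradient map of `f + φ` with step size `1 / L`: `p y` minimizes the sum of `φ`
and the quadratic model of `f` at `y`. -/
def IsProxGradMap (L : ℝ) (f : E → ℝ) (f' : E → E) (φ : E → ℝ) (p : E → E) : Prop :=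
  ∀ y, IsMinOn (fun z => f y + ⟪f' y, z - y⟫ + L / 2 * ‖z - y‖ ^ 2 + φ z) Set.univ (p y)

lemma norm_sub_sq_eq_add (a b z : E) :
    ‖b - z‖ ^ 2 = ‖a - z‖ ^ 2 + 2 * ⟪a - z, b - a⟫ + ‖b - a‖ ^ 2 := by
  rw [← norm_add_sq_real, add_comm, sub_add_sub_cancel]

lemma hasFDerivAt_quadraticModel (c : ℝ) (g y x : E) :
    HasFDerivAt (fun z => c + ⟪g, z - y⟫ + L / 2 * ‖z - y‖ ^ 2)
      (innerSL ℝ (g + L • (x - y))) x := by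
  have hsub : HasFDerivAt (fun z => z - y) (.id ℝ E) x := (hasFDerivAt_id x).sub_const y
  refine (((innerSL ℝ g).hasFDerivAt.comp x hsub |>.const_add c).add
    (hsub.norm_sq.const_mul (L / 2))).congr_fderiv ?_
  ext v
  simp
  ring

namespace IsProxGradMap

lemma add_inner_subgradient_le (hp : IsProxGradMap L f f' φ p) (hφ : ConvexOn ℝ Set.univ φ)
    (y z : E) : φ (p y) + ⟪L • (y - p y) - f' y, z - p y⟫ ≤ φ z := by
  have hopt : φ (p y) ≤ φ z + ⟪f' y + L • (p y - y), z - p y⟫ :=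
    le_add_fderiv_of_isMinOn_add hφ (hasFDerivAt_quadraticModel (f y) (f' y) y (p y)) (hp y)
      (Set.mem_univ _) (Set.mem_univ z)
  have hneg : L • (y - p y) - f' y = -(f' y + L • (p y - y)) := by module
  rw [hneg, inner_neg_left]
  linarith

lemma add_sq_norm_sub_le (hp : IsProxGradMap L f f' φ p) (hf : IsSmoothConvex L f f')
    (hφ : ConvexOn ℝ Set.univ φ) (y z : E) :
    f (p y) + φ (p y) + L / 2 * ‖p y - z‖ ^ 2 ≤ f z + φ z + L / 2 * ‖y - z‖ ^ 2 := by
  have hφ_lower := hp.add_inner_subgradient_le hφ y z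
  have hf_lower := hf.add_inner_le y z
  have hf_upper := hf.le_add_inner_add_sq y (p y)
  have hz : z - y = (z - p y) + (p y - y) := (sub_add_sub_cancel z (p y) y).symm
  have hcomm : ⟪p y - z, y - p y⟫ = -⟪y - p y, z - p y⟫ := by
    rw [real_inner_comm, ← inner_neg_right, neg_sub]
  rw [inner_sub_left, real_inner_smul_left] at hφ_lower
  rw [hz, inner_add_right] at hf_lower
  rw [norm_sub_sq_eq_add (p y) y z, hcomm, norm_sub_rev y (p y)]
  linarith

lemma norm_sub_le (hp : IsProxGradMap L f f' φ p) (hf : IsSmoothConvex L f f') (hL : 0 < L)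
    (hφ : ConvexOn ℝ Set.univ φ) (y z : E) : ‖p y - p z‖ ≤ ‖y - z‖ := by
  set w := L • (y - z) - (f' y - f' z) with hw
  have hmono : L * ‖p y - p z‖ ^ 2 ≤ ⟪w, p y - p z⟫ := by
    have hy := hp.add_inner_subgradient_le hφ y (p z)
    have hz := hp.add_inner_subgradient_le hφ z (p y)
    have hsplit : w = (L • (y - p y) - f' y) - (L • (z - p z) - f' z) + L • (p y - p z) := by
      rw [hw]
      module
    rw [hsplit, inner_add_left, inner_sub_left, real_inner_smul_left, real_inner_self_eq_norm_sq]
    rw [← neg_sub (p y) (p z), inner_neg_right] at hy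
    linarith
  have hle : L * ‖p y - p z‖ ^ 2 ≤ L * ‖y - z‖ * ‖p y - p z‖ :=
    hmono.trans <| (real_inner_le_norm _ _).trans <| by
      gcongr
      exact hf.norm_smul_sub_sub_le hL y z
  by_contra! hlt
  have hpos : 0 < ‖p y - p z‖ := (norm_nonneg _).trans_lt hlt
  have hgt := mul_lt_mul_of_pos_left (mul_lt_mul_of_pos_right hlt hpos) hL
  linarith

end IsProxGradMap

end InnerProductSpace

/-! ### The energy estimate -/

section EnergyStep

variable {E : Type*} [NormedAddCommGroup E] [InnerProductSpace ℝ E] {L : ℝ} {F : E → ℝ}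

lemma energy_step_le {S τ : ℝ} (hS : 0 ≤ S) (hτ : 0 ≤ τ) {x y y' u : E}
    (hF : ∀ z, F y' + L / 2 * ‖y' - z‖ ^ 2 ≤ F z + L / 2 * ‖y - z‖ ^ 2)
    (hu : τ • u = (S + τ) • y - S • x) (z : E) :
    (S + τ) * (F y' - F z) + L / 2 * ‖u + τ • (y' - y) - z‖ ^ 2
        + L / 2 * ((S + τ - τ ^ 2) * ‖y' - y‖ ^ 2)
      ≤ S * (F x - F z) + L / 2 * ‖u - z‖ ^ 2 := by
  have hx := mul_le_mul_of_nonneg_left (hF x) hS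
  have hz := mul_le_mul_of_nonneg_left (hF z) hτ
  rw [norm_sub_sq_eq_add y] at hx hz
  have hinner : τ * ⟪u - z, y' - y⟫ = S * ⟪y - x, y' - y⟫ + τ * ⟪y - z, y' - y⟫ := by
    have hvec : τ • (u - z) = S • (y - x) + τ • (y - z) := by
      rw [smul_sub, hu]
      module
    rw [← real_inner_smul_left, hvec, inner_add_left, real_inner_smul_left, real_inner_smul_left]
  have hsq : ‖u + τ • (y' - y) - z‖ ^ 2
      = ‖u - z‖ ^ 2 + 2 * (τ * ⟪u - z, y' - y⟫) + τ ^ 2 * ‖y' - y‖ ^ 2 := by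
    rw [norm_sub_sq_eq_add u, add_sub_cancel_left, real_inner_smul_right, norm_smul, mul_pow,
      Real.norm_eq_abs, sq_abs]
  rw [hsq, hinner]
  linarith

end EnergyStep

/-- The partial sum `T_i = t_0 + ⋯ + t_i`, with the term `t_i` included. -/
def cumSum (t : ℕ → ℝ) (i : ℕ) : ℝ := ∑ l ∈ Finset.range (i + 1), t l

lemma cumSum_eq_sum_range_add (t : ℕ → ℝ) (i : ℕ) :
    cumSum t i = ∑ l ∈ Finset.range i, t l + t i :=
  Finset.sum_range_succ t i

lemma cumSum_zero (t : ℕ → ℝ) : cumSum t 0 = t 0 := Finset.sum_range_one t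

lemma cumSum_succ (t : ℕ → ℝ) (i : ℕ) : cumSum t (i + 1) = cumSum t i + t (i + 1) :=
  cumSum_eq_sum_range_add t (i + 1)

/-- The total weight `W_n = ∑_{i<n} (T_i - t_i²) + T_{n-1}` with which the squared minimal gradient
mapping norm enters the energy estimate after `n` steps. -/
def gradWeight (t : ℕ → ℝ) (n : ℕ) : ℝ :=
  ∑ i ∈ Finset.range n, (cumSum t i - t i ^ 2) + ∑ i ∈ Finset.range n, t i

section Iterates

variable {E : Type*} [NormedAddCommGroup E] [InnerProductSpace ℝ E]
  {L : ℝ} {F : E → ℝ} {p : E → E} {t : ℕ → ℝ} {N : ℕ} {x y : ℕ → E}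

/-- `x` and `y` are the first `N` iterates of the generalized fast proximal gradient method (GFPGM)
with proximal gradient map `p` and parameters `t`. -/
structure IsGFPGM (p : E → E) (t : ℕ → ℝ) (N : ℕ) (x y : ℕ → E) : Prop where
  init : y 0 = x 0
  prox : ∀ i < N, x (i + 1) = p (y i)
  momentum : ∀ i, i + 1 < N → y (i + 1) = x (i + 1)
    + ((cumSum t i - t i) * t (i + 1) / (t i * cumSum t (i + 1))) • (x (i + 1) - x i)
    + ((t i ^ 2 - cumSum t i) * t (i + 1) / (t i * cumSum t (i + 1))) • (x (i + 1) - y i)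

/-- The auxiliary point `u_n = x_0 + ∑_{i<n} t_i (x_{i+1} - y_i)` of the energy estimate. -/
def auxPoint (t : ℕ → ℝ) (x y : ℕ → E) (n : ℕ) : E :=
  x 0 + ∑ i ∈ Finset.range n, t i • (x (i + 1) - y i)

lemma auxPoint_succ (t : ℕ → ℝ) (x y : ℕ → E) (n : ℕ) :
    auxPoint t x y (n + 1) = auxPoint t x y n + t n • (x (n + 1) - y n) := by
  rw [auxPoint, Finset.sum_range_succ, ← add_assoc, auxPoint]

/-- The energy `T_{n-1} (F x_n - F z) + L/2 ‖u_n - z‖²`, with `T_{-1} = 0`. -/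
noncomputable def energy (L : ℝ) (F : E → ℝ) (t : ℕ → ℝ) (x y : ℕ → E) (z : E) (n : ℕ) : ℝ :=
  (∑ i ∈ Finset.range n, t i) * (F (x n) - F z) + L / 2 * ‖auxPoint t x y n - z‖ ^ 2

namespace IsGFPGM

lemma momentum_smul (hxy : IsGFPGM p t N x y) (ht : ∀ i < N, 0 < t i) {i : ℕ} (hi : i + 1 < N) :
    (t i * cumSum t (i + 1)) • (y (i + 1) - x (i + 1))
      = ((cumSum t i - t i) * t (i + 1)) • (x (i + 1) - x i)
        + ((t i ^ 2 - cumSum t i) * t (i + 1)) • (x (i + 1) - y i) := by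
  have hti : t i ≠ 0 := (ht i (by omega)).ne'
  have hTi : cumSum t (i + 1) ≠ 0 :=
    (Finset.sum_pos (fun l hl => ht l (by have := Finset.mem_range.1 hl; omega))
      Finset.nonempty_range_add_one).ne'
  rw [hxy.momentum i hi, add_assoc, add_sub_cancel_left, smul_add, smul_smul, smul_smul,
    mul_div_cancel₀ _ (mul_ne_zero hti hTi), mul_div_cancel₀ _ (mul_ne_zero hti hTi)]

/-- The momentum coefficients are chosen to make this identity hold. -/
lemma smul_auxPoint (hxy : IsGFPGM p t N x y) (ht : ∀ i < N, 0 < t i) :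
    ∀ i < N, t i • auxPoint t x y i
      = cumSum t i • y i - (∑ l ∈ Finset.range i, t l) • x i := by
  intro i
  induction i with
  | zero => intro _; simp [auxPoint, cumSum, hxy.init]
  | succ i ih =>
    intro hi
    have hti : t i ≠ 0 := (ht i (by omega)).ne'
    have hmom := hxy.momentum_smul ht hi
    have hprev := ih (by omega)
    have hS : ∑ l ∈ Finset.range i, t l = cumSum t i - t i := by
      rw [cumSum_eq_sum_range_add, add_sub_cancel_right]
    refine smul_right_injective E hti ?_
    change t i • t (i + 1) • auxPoint t x y (i + 1)
      = t i • (cumSum t (i + 1) • y (i + 1) - cumSum t i • x (i + 1))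
    calc t i • t (i + 1) • auxPoint t x y (i + 1)
        = t (i + 1) • (t i • auxPoint t x y i + t i ^ 2 • (x (i + 1) - y i)) := by
          rw [auxPoint_succ]
          module
      _ = (t i * cumSum t (i + 1)) • (y (i + 1) - x (i + 1))
          + (t i * t (i + 1)) • x (i + 1) := by
          rw [hprev, hmom, hS]
          module
      _ = t i • (cumSum t (i + 1) • y (i + 1) - cumSum t i • x (i + 1)) := by
          rw [cumSum_succ]
          module

lemma energy_succ_add_le (hxy : IsGFPGM p t N x y) (ht : ∀ i < N, 0 < t i)
    (hF : ∀ y z, F (p y) + L / 2 * ‖p y - z‖ ^ 2 ≤ F z + L / 2 * ‖y - z‖ ^ 2)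
    (z : E) {n : ℕ} (hn : n < N) :
    energy L F t x y z (n + 1) + L / 2 * ((cumSum t n - t n ^ 2) * ‖y n - p (y n)‖ ^ 2)
      ≤ energy L F t x y z n := by
  have hS : 0 ≤ ∑ i ∈ Finset.range n, t i :=
    Finset.sum_nonneg fun i hi => (ht i ((Finset.mem_range.1 hi).trans hn)).le
  have hu := hxy.smul_auxPoint ht n hn
  rw [cumSum_eq_sum_range_add] at hu
  rw [energy, energy, auxPoint_succ, hxy.prox n hn, Finset.sum_range_succ,
    cumSum_eq_sum_range_add, norm_sub_rev (y n)]
  exact energy_step_le hS (ht n hn).le (hF (y n)) hu z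

lemma energy_add_sum_le (hxy : IsGFPGM p t N x y) (ht : ∀ i < N, 0 < t i)
    (hF : ∀ y z, F (p y) + L / 2 * ‖p y - z‖ ^ 2 ≤ F z + L / 2 * ‖y - z‖ ^ 2)
    (z : E) {n : ℕ} (hn : n ≤ N) :
    energy L F t x y z n
        + L / 2 * ∑ i ∈ Finset.range n, (cumSum t i - t i ^ 2) * ‖y i - p (y i)‖ ^ 2
      ≤ L / 2 * ‖x 0 - z‖ ^ 2 := by
  induction n with
  | zero => simp [energy, auxPoint]
  | succ n ih =>
    rw [Finset.sum_range_succ, mul_add]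
    linarith [ih (by omega), hxy.energy_succ_add_le ht hF z hn]

lemma gradWeight_mul_sq_le (hxy : IsGFPGM p t N x y) (hL : 0 < L) (ht : ∀ i < N, 0 < t i)
    (ht_sq : ∀ i < N, t i ^ 2 ≤ cumSum t i)
    (hF : ∀ y z, F (p y) + L / 2 * ‖p y - z‖ ^ 2 ≤ F z + L / 2 * ‖y - z‖ ^ 2)
    {xs : E} (hxs : IsMinOn F Set.univ xs) {G : ℝ} (hG : 0 ≤ G)
    (hGy : ∀ i < N, G ≤ ‖y i - p (y i)‖) (hGx : G ≤ ‖x N - p (x N)‖) :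
    gradWeight t N * G ^ 2 ≤ ‖x 0 - xs‖ ^ 2 := by
  have hsum : (∑ i ∈ Finset.range N, (cumSum t i - t i ^ 2)) * G ^ 2
      ≤ ∑ i ∈ Finset.range N, (cumSum t i - t i ^ 2) * ‖y i - p (y i)‖ ^ 2 := by
    rw [Finset.sum_mul]
    refine Finset.sum_le_sum fun i hi => ?_
    have hi := Finset.mem_range.1 hi
    exact mul_le_mul_of_nonneg_left (pow_le_pow_left₀ hG (hGy i hi) 2) (sub_nonneg.2 (ht_sq i hi))
  have hlast : (∑ i ∈ Finset.range N, t i) * (L / 2 * G ^ 2)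
      ≤ (∑ i ∈ Finset.range N, t i) * (F (x N) - F xs) := by
    have hdecrease := hF (x N) (x N)
    have hmin : F xs ≤ F (p (x N)) := hxs (Set.mem_univ _)
    have hGsq := pow_le_pow_left₀ hG hGx 2
    rw [sub_self, norm_zero, norm_sub_rev] at hdecrease
    refine mul_le_mul_of_nonneg_left ?_
      (Finset.sum_nonneg fun i hi => (ht i (Finset.mem_range.1 hi)).le)
    linarith [mul_le_mul_of_nonneg_left hGsq (half_pos hL).le]
  have henergy := hxy.energy_add_sum_le ht hF xs le_rfl
  have hdist : 0 ≤ L / 2 * ‖auxPoint t x y N - xs‖ ^ 2 := by positivity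
  refine le_of_mul_le_mul_left ?_ (half_pos hL)
  rw [energy] at henergy
  rw [gradWeight]
  linarith [mul_le_mul_of_nonneg_left hsum (half_pos hL).le]

end IsGFPGM

end Iterates

/-! ### The FPGM-OPG parameters -/

lemma gradWeight_add (t : ℕ → ℝ) (n k : ℕ) :
    gradWeight t (n + k) = gradWeight t n + k * ∑ i ∈ Finset.range n, t i
      + ∑ j ∈ Finset.range k, t (n + j) * (k + 1 - j - t (n + j)) := by
  induction k with
  | zero => simp
  | succ k ih =>
    have hshift : ∑ j ∈ Finset.range k, t (n + j) * ((k + 1 : ℕ) + 1 - j - t (n + j))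
        = ∑ j ∈ Finset.range k, t (n + j) * (k + 1 - j - t (n + j))
          + ∑ j ∈ Finset.range k, t (n + j) := by
      rw [← Finset.sum_add_distrib]
      exact Finset.sum_congr rfl fun j _ => by push_cast; ring
    have hstep : gradWeight t (n + k + 1)
        = gradWeight t (n + k) + (cumSum t (n + k) - t (n + k) ^ 2) + t (n + k) := by
      rw [gradWeight, gradWeight, Finset.sum_range_succ, Finset.sum_range_succ]
      ring
    rw [← add_assoc, hstep, ih, cumSum_eq_sum_range_add, Finset.sum_range_add,
      Finset.sum_range_succ _ k, hshift]
    push_cast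
    ring

/-- The FPGM-OPG parameters: those of FISTA up to the index `⌈N/2⌉ - 1`, here `(N + 1) / 2 - 1`, and
`t_i = (N - i + 1) / 2` after it. -/
structure IsOPGParams (N : ℕ) (t : ℕ → ℝ) : Prop where
  zero : t 0 = 1
  succ_of_first_half : ∀ i, i + 2 ≤ (N + 1) / 2 →
    t (i + 1) = (1 + Real.sqrt (1 + 4 * t i ^ 2)) / 2
  succ_of_second_half : ∀ i, (N + 1) / 2 ≤ i + 1 → i + 2 ≤ N → t (i + 1) = ((N : ℝ) - i) / 2

namespace IsOPGParams

variable {N : ℕ} {t : ℕ → ℝ}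

lemma cumSum_eq_sq (ht : IsOPGParams N t) {i : ℕ} (hi : i + 1 ≤ (N + 1) / 2) :
    cumSum t i = t i ^ 2 := by
  induction i with
  | zero => simp [cumSum_zero, ht.zero]
  | succ i ih =>
    have hsqrt : Real.sqrt (1 + 4 * t i ^ 2) ^ 2 = 1 + 4 * t i ^ 2 :=
      Real.sq_sqrt (by positivity)
    rw [cumSum_succ, ih (by omega), ht.succ_of_first_half i hi]
    linarith

lemma add_two_div_two_le (ht : IsOPGParams N t) {i : ℕ} (hi : i + 1 ≤ (N + 1) / 2) :
    ((i : ℝ) + 2) / 2 ≤ t i := by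
  induction i with
  | zero => simp [ht.zero]
  | succ i ih =>
    have hsqrt : 2 * t i ≤ Real.sqrt (1 + 4 * t i ^ 2) := Real.le_sqrt_of_sq_le (by linarith)
    rw [ht.succ_of_first_half i hi]
    push_cast
    linarith [ih (by omega)]

lemma pos (ht : IsOPGParams N t) {i : ℕ} (hi : i < N) : 0 < t i := by
  rcases le_or_gt (i + 1) ((N + 1) / 2) with hfirst | hsecond
  · exact lt_of_lt_of_le (by positivity) (ht.add_two_div_two_le hfirst)
  · obtain ⟨i, rfl⟩ : ∃ j, i = j + 1 := Nat.exists_eq_succ_of_ne_zero (by omega)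
    have hiN : (i : ℝ) + 1 < N := by exact_mod_cast hi
    rw [ht.succ_of_second_half i (by omega) (by omega)]
    linarith

lemma succ_le_of_second_half (ht : IsOPGParams N t) {i : ℕ} (hi : (N + 1) / 2 ≤ i + 1)
    (hiN : i + 2 ≤ N) : t (i + 1) ≤ t i := by
  rw [ht.succ_of_second_half i hi hiN]
  rcases hi.eq_or_lt with hmid | hsecond
  · have hN : (N : ℝ) ≤ 2 * i + 2 := by exact_mod_cast (by omega : N ≤ 2 * i + 2)
    linarith [ht.add_two_div_two_le hmid.ge]
  · obtain ⟨i, rfl⟩ : ∃ j, i = j + 1 := Nat.exists_eq_succ_of_ne_zero (by omega)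
    rw [ht.succ_of_second_half i (by omega) (by omega)]
    push_cast
    linarith

lemma sq_le_cumSum (ht : IsOPGParams N t) {i : ℕ} (hi : i < N) : t i ^ 2 ≤ cumSum t i := by
  induction i with
  | zero => simp [cumSum_zero, ht.zero]
  | succ i ih =>
    rcases le_or_gt (i + 2) ((N + 1) / 2) with hfirst | hsecond
    · exact (ht.cumSum_eq_sq hfirst).ge
    · calc t (i + 1) ^ 2 ≤ t i ^ 2 :=
            pow_le_pow_left₀ (ht.pos hi).le (ht.succ_le_of_second_half (by omega) (by omega)) 2
        _ ≤ cumSum t i := ih (by omega)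
        _ ≤ cumSum t (i + 1) := by
            rw [cumSum_succ]
            exact le_add_of_nonneg_right (ht.pos hi).le

lemma gradWeight_eq (ht : IsOPGParams N t) {m k : ℕ} (hm : (N + 1) / 2 = m + 1)
    (hk : N = m + 1 + k) :
    gradWeight t N
      = (k + 1) * t m ^ 2 + ∑ j ∈ Finset.range k, (((k : ℝ) + 1 - j) / 2) ^ 2 := by
  have hfirst : ∑ i ∈ Finset.range (m + 1), (cumSum t i - t i ^ 2) = 0 :=
    Finset.sum_eq_zero fun i hi => by
      rw [ht.cumSum_eq_sq (by have := Finset.mem_range.1 hi; omega), sub_self]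
  have hTm : ∑ i ∈ Finset.range (m + 1), t i = t m ^ 2 := ht.cumSum_eq_sq hm.ge
  have hsecond : ∀ j ∈ Finset.range k,
      t (m + 1 + j) * (k + 1 - j - t (m + 1 + j)) = (((k : ℝ) + 1 - j) / 2) ^ 2 := fun j hj => by
    have hj := Finset.mem_range.1 hj
    have htj : t (m + 1 + j) = ((k : ℝ) + 1 - j) / 2 := by
      rw [add_right_comm, ht.succ_of_second_half (m + j) (by omega) (by omega), hk]
      push_cast
      ring
    rw [htj]
    ring
  rw [hk, gradWeight_add, Finset.sum_congr rfl hsecond, gradWeight, hfirst, hTm]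
  ring

end IsOPGParams

lemma sum_range_half_sub_sq (k : ℕ) :
    ∑ j ∈ Finset.range k, (((k : ℝ) + 1 - j) / 2) ^ 2
      = (((k : ℝ) + 1) * (k + 2) * (2 * k + 3) / 6 - 1) / 4 := by
  induction k with
  | zero => norm_num
  | succ k ih =>
    have hshift : ∀ j : ℕ, (((k + 1 : ℕ) : ℝ) + 1 - (j + 1 : ℕ)) / 2 = ((k : ℝ) + 1 - j) / 2 :=
      fun j => by push_cast; ring
    rw [Finset.sum_range_succ']
    simp only [hshift]
    rw [ih]
    push_cast
    ring

lemma IsOPGParams.le_gradWeight {N : ℕ} {t : ℕ → ℝ} (ht : IsOPGParams N t) (hN : 0 < N) :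
    ((N : ℝ) + 1) ^ 3 / 24 ≤ gradWeight t N := by
  obtain ⟨m, hm⟩ : ∃ m, (N + 1) / 2 = m + 1 := Nat.exists_eq_succ_of_ne_zero (by omega)
  obtain ⟨k, hk⟩ : ∃ k, N = m + 1 + k := Nat.exists_eq_add_of_le (by omega)
  have htm : (((m : ℝ) + 2) / 2) ^ 2 ≤ t m ^ 2 :=
    pow_le_pow_left₀ (by positivity) (ht.add_two_div_two_le hm.ge) 2
  rw [ht.gradWeight_eq hm hk, sum_range_half_sub_sq]
  refine le_trans ?_ (add_le_add_left (mul_le_mul_of_nonneg_left htm (by positivity)) _)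
  have hm0 : (0 : ℝ) ≤ m := Nat.cast_nonneg m
  obtain rfl | rfl : k = m ∨ k = m + 1 := by omega
  · rw [hk]
    push_cast
    nlinarith [mul_nonneg hm0 hm0]
  · rw [hk]
    push_cast
    nlinarith [mul_nonneg hm0 hm0]

lemma le_div_of_cube_mul_sq_le {a g d : ℝ} (ha : 0 < a) (hd : 0 ≤ d)
    (h : a ^ 3 / 24 * g ^ 2 ≤ d ^ 2) : g ≤ 2 * Real.sqrt 6 * d / (a * Real.sqrt a) := by
  rw [le_div_iff₀ (by positivity)]
  refine le_of_sq_le_sq ?_ (by positivity)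
  simp only [mul_pow]
  rw [Real.sq_sqrt ha.le, Real.sq_sqrt (by norm_num)]
  linarith

end ProxGrad

open ProxGrad in
theorem fpgm_opg_cgm_bound_general
    {E : Type*} [NormedAddCommGroup E] [InnerProductSpace ℝ E] {L : ℝ} (hL : 0 < L)
    {f : E → ℝ} {f' : E → E} {φ : E → ℝ} (hf : IsSmoothConvex L f f')
    (hφ : ConvexOn ℝ Set.univ φ) {p : E → E} (hp : IsProxGradMap L f f' φ p)
    {xs : E} (hxs : IsMinOn (fun z => f z + φ z) Set.univ xs) {N : ℕ} (hN : 0 < N)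
    {t : ℕ → ℝ} (ht : IsOPGParams N t) {x y : ℕ → E} (hxy : IsGFPGM p t N x y) :
    (Finset.range (N + 1)).inf' (Finset.nonempty_range_iff.mpr (Nat.succ_ne_zero N))
        (fun i => L * ‖x i - p (x i)‖)
      ≤ min ((Finset.range N).inf' (Finset.nonempty_range_iff.mpr hN.ne')
          (fun i => L * ‖y i - p (y i)‖)) (L * ‖x N - p (x N)‖) ∧
    min ((Finset.range N).inf' (Finset.nonempty_range_iff.mpr hN.ne')
          (fun i => L * ‖y i - p (y i)‖)) (L * ‖x N - p (x N)‖)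
      ≤ 2 * Real.sqrt 6 * (L * ‖x 0 - xs‖) / (((N : ℝ) + 1) * Real.sqrt ((N : ℝ) + 1)) := by
  refine ⟨le_min (Finset.le_inf' _ _ fun i hi => ?_)
    (Finset.inf'_le _ (Finset.self_mem_range_succ N)), ?_⟩
  · have hi := Finset.mem_range.1 hi
    refine (Finset.inf'_le _ (Finset.mem_range.2 (Nat.succ_lt_succ hi))).trans ?_
    rw [hxy.prox i hi]
    exact mul_le_mul_of_nonneg_left (hp.norm_sub_le hf hL hφ _ _) hL.le
  set G := min ((Finset.range N).inf' _ fun i => L * ‖y i - p (y i)‖) (L * ‖x N - p (x N)‖)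
  have hG : 0 ≤ G := le_min (Finset.le_inf' _ _ fun i _ => by positivity) (by positivity)
  have hGy : ∀ i < N, G / L ≤ ‖y i - p (y i)‖ := fun i hi => (div_le_iff₀' hL).2 <|
    (min_le_left _ _).trans (Finset.inf'_le _ (Finset.mem_range.2 hi))
  have hGx : G / L ≤ ‖x N - p (x N)‖ := (div_le_iff₀' hL).2 (min_le_right _ _)
  have hrate : gradWeight t N * (G / L) ^ 2 ≤ ‖x 0 - xs‖ ^ 2 :=
    hxy.gradWeight_mul_sq_le hL (fun _ => ht.pos) (fun _ => ht.sq_le_cumSum)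
      (hp.add_sq_norm_sub_le hf hφ) hxs (div_nonneg hG hL.le) hGy hGx
  have hbound := le_div_of_cube_mul_sq_le (by positivity) (norm_nonneg _)
    ((mul_le_mul_of_nonneg_right (ht.le_gradWeight hN) (sq_nonneg _)).trans hrate)
  rwa [div_le_iff₀' hL, ← mul_div_assoc, mul_left_comm] at hbound

/-- FPGM-OPG satisfies, for N ≥ 3,
min_{0≤i≤N} ‖∇̃F(x_i)‖ ≤ min( min_{0≤i≤N−1} ‖∇̃F(y_i)‖, ‖∇̃F(x_N)‖ )
≤ 2√6·LR/(N√(N−2)). -/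
theorem fpgm_opg_cgm_bound
    {E : Type*} [NormedAddCommGroup E] [InnerProductSpace ℝ E]
    (L : ℝ) (hL : 0 < L)
    (f : E → ℝ) (f' : E → E) (φ : E → ℝ)
    (hf : ConvexOn ℝ Set.univ f)
    (hgrad : ∀ z : E, HasFDerivAt f (innerSL ℝ (f' z)) z)
    (hLip : ∀ u v : E, ‖f' u - f' v‖ ≤ L * ‖u - v‖)
    (hφ : ConvexOn ℝ Set.univ φ)
    (p : E → E)
    (hp : ∀ y : E, IsMinOn
      (fun z => f y + ⟪f' y, z - y⟫ + L / 2 * ‖z - y‖ ^ 2 + φ z) Set.univ (p y))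
    (xs : E) (hxs : IsMinOn (fun z => f z + φ z) Set.univ xs)
    (R : ℝ) (hR0 : 0 ≤ R)
    (N : ℕ) (hN : 3 ≤ N)
    (t T : ℕ → ℝ) (ht0 : t 0 = 1)
    (ht1 : ∀ i, i + 2 ≤ (N + 1) / 2 → t (i + 1) = (1 + Real.sqrt (1 + 4 * t i ^ 2)) / 2)
    (ht2 : ∀ i, (N + 1) / 2 ≤ i + 1 → i + 2 ≤ N → t (i + 1) = ((N : ℝ) - i) / 2)
    (hT : ∀ i, T i = ∑ l ∈ Finset.range (i + 1), t l)
    (x y : ℕ → E)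
    (hy0 : y 0 = x 0)
    (hx : ∀ i < N, x (i + 1) = p (y i))
    (hy : ∀ i, i + 1 < N → y (i + 1) = x (i + 1)
        + ((T i - t i) * t (i + 1) / (t i * T (i + 1))) • (x (i + 1) - x i)
        + ((t i ^ 2 - T i) * t (i + 1) / (t i * T (i + 1))) • (x (i + 1) - y i))
    (hR : ‖x 0 - xs‖ ≤ R) :
    (Finset.range (N + 1)).inf' (Finset.nonempty_range_iff.mpr (Nat.succ_ne_zero N))
        (fun i => L * ‖x i - p (x i)‖)
      ≤ min ((Finset.range N).inf' (Finset.nonempty_range_iff.mpr (by omega))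
          (fun i => L * ‖y i - p (y i)‖)) (L * ‖x N - p (x N)‖) ∧
    min ((Finset.range N).inf' (Finset.nonempty_range_iff.mpr (by omega))
          (fun i => L * ‖y i - p (y i)‖)) (L * ‖x N - p (x N)‖)
      ≤ 2 * Real.sqrt 6 * L * R / ((N : ℝ) * Real.sqrt ((N : ℝ) - 2)) := by
  obtain rfl : T = ProxGrad.cumSum t := funext hT
  refine (fpgm_opg_cgm_bound_general hL ⟨hf, hgrad, hLip⟩ hφ hp hxs (by omega)
    ⟨ht0, ht1, ht2⟩ ⟨hy0, hx, hy⟩).imp_right fun h => h.trans ?_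
  have hN' : (3 : ℝ) ≤ N := by exact_mod_cast hN
  have hsqrt : 0 < Real.sqrt ((N : ℝ) - 2) := Real.sqrt_pos.2 (by linarith)
  rw [mul_assoc _ L R]
  gcongr <;> linarith
end

section
/- Let a ≥ 2 be a real number and take t_i = (i+a)/a in GFPGM (the method FPGM-a). Then for every N ≥ 1, min_{0 ≤ i ≤ N} ‖∇̃F(x_i)‖ ≤ min( min_{0 ≤ i ≤ N−1} ‖∇̃F(y_i)‖, ‖∇̃F(x_N)‖ ) ≤ a√6 · L R / √( N((a−2)N² + 3(a² − a + 1)N + (3a² + 2a − 1)) ). -/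
/-!
A proximal gradient step from `y` satisfies, for every `z`,
`F (p y) ≤ F z - L/2 ‖y - p y‖² + L ⟪y - z, y - p y⟫`.
Weighting this by `T i - t i` at `z = x i` and by `t i` at `z = xs`, the GFPGM momentum is exactly
what makes the auxiliary points `v i = (t i)⁻¹ (T i y i - (T i - t i) x i)` move by
`v (i + 1) = v i - t i (y i - p (y i))`. Hence the potential
`(T i - t i) (F (x i) - F xs) + L/2 ‖v i - xs‖²` decreases at each step by at least
`L/2 (T i - t i²) ‖y i - p (y i)‖²`. Summing up, and bounding `F (x N) - F xs` below by one more
proximal step, a weighted sum of all the squared residuals is at most `‖x 0 - xs‖²`; for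
`t i = (i + a) / a` the total weight is the polynomial under the square root divided by `6 a²`.

The first inequality reflects that `p` is nonexpansive, so the residual at `x (i + 1) = p (y i)`
is at most the one at `y i`.
-/

open scoped RealInnerProductSpace

section FirstOrder

variable {V W : Type*} [NormedAddCommGroup V] [NormedSpace ℝ V]
  [NormedAddCommGroup W] [NormedSpace ℝ W]

lemma norm_sub_linearization_le_of_lipschitz {f : V → W} {f' : V → V →L[ℝ] W} {L : ℝ} {u : V}
    (hf : ∀ z, HasFDerivAt f (f' z) z) (hLip : ∀ z, ‖f' z - f' u‖ ≤ L * ‖z - u‖) (v : V) :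
    ‖f v - f u - f' u (v - u)‖ ≤ L / 2 * ‖v - u‖ ^ 2 := by
  let γ : ℝ → V := AffineMap.lineMap u v
  have hremainder : ∀ s : ℝ, HasDerivAt (fun s => f (γ s) - f u - s • f' u (v - u))
      ((f' (γ s) - f' u) (v - u)) s := fun s =>
    ((((hf (γ s)).comp_hasDerivAt s AffineMap.hasDerivAt_lineMap).sub_const (f u)).sub
      ((hasDerivAt_id s).smul_const (f' u (v - u)))).congr_deriv (by simp)
  have hquadratic : ∀ s : ℝ, HasDerivAt (fun s => L / 2 * ‖v - u‖ ^ 2 * s ^ 2)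
      (L * ‖v - u‖ ^ 2 * s) s := fun s =>
    ((hasDerivAt_pow 2 s).const_mul (L / 2 * ‖v - u‖ ^ 2)).congr_deriv (by push_cast; ring)
  have hbound : ∀ s ∈ Set.Ico (0 : ℝ) 1,
      ‖(f' (γ s) - f' u) (v - u)‖ ≤ L * ‖v - u‖ ^ 2 * s := fun s hs =>
    calc ‖(f' (γ s) - f' u) (v - u)‖
        ≤ ‖f' (γ s) - f' u‖ * ‖v - u‖ := ContinuousLinearMap.le_opNorm _ _
      _ ≤ L * ‖γ s - u‖ * ‖v - u‖ := by gcongr; exact hLip _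
      _ = L * ‖v - u‖ ^ 2 * s := by
        rw [show γ s - u = s • (v - u) by simp [γ, AffineMap.lineMap_apply],
          norm_smul, Real.norm_of_nonneg hs.1]
        ring
  simpa [γ] using image_norm_le_of_norm_deriv_right_le_deriv_boundary
    (fun s _ => (hremainder s).continuousAt.continuousWithinAt)
    (fun s _ => (hremainder s).hasDerivWithinAt) (by simp [γ]) hquadratic hbound
    (Set.right_mem_Icc.2 zero_le_one)

lemma sub_fderivWithin_le_of_isMinOn_add {h φ : V → ℝ} {h' : V →L[ℝ] ℝ} {s : Set V} {w z : V}
    (hφ : ConvexOn ℝ s φ) (hh : HasFDerivWithinAt h h' s w)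
    (hmin : IsMinOn (fun z => h z + φ z) s w) (hw : w ∈ s) (hz : z ∈ s) :
    φ w - h' (z - w) ≤ φ z := by
  let γ : ℝ → V := AffineMap.lineMap w z
  have hγ : Set.MapsTo γ (Set.Icc 0 1) s := fun r hr => hφ.1.lineMap_mem hw hz hr
  have hderiv : HasDerivWithinAt (fun r => h (γ r) + r * (φ z - φ w))
      (h' (z - w) + (φ z - φ w)) (Set.Icc 0 1) 0 := by
    have hhγ : HasFDerivWithinAt h h' s (γ 0) := by simpa [γ] using hh
    exact ((hhγ.comp_hasDerivWithinAt 0 AffineMap.hasDerivWithinAt_lineMap hγ).add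
      ((hasDerivWithinAt_id 0 _).mul_const (φ z - φ w))).congr_deriv (by simp)
  have hmin_zero : IsMinOn (fun r => h (γ r) + r * (φ z - φ w)) (Set.Icc 0 1) 0 := by
    refine isMinOn_iff.2 fun r hr => ?_
    have hφγ : φ (γ r) ≤ (1 - r) * φ w + r * φ z := by
      simpa [γ, AffineMap.lineMap_apply_module] using
        hφ.2 hw hz (sub_nonneg.2 hr.2) hr.1 (sub_add_cancel 1 r)
    have hwγ : h w + φ w ≤ h (γ r) + φ (γ r) := isMinOn_iff.1 hmin _ (hγ hr)
    simp only [γ, AffineMap.lineMap_apply_zero]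
    linarith
  have hnonneg := hmin_zero.localize.hasFDerivWithinAt_nonneg hderiv.hasFDerivWithinAt
    (y := 1) (mem_posTangentConeAt_of_segment_subset (by simp [segment_eq_Icc]))
  simp only [ContinuousLinearMap.toSpanSingleton_apply, one_smul] at hnonneg
  linarith

lemma add_fderivWithin_le_of_convexOn {f : V → ℝ} {f' : V →L[ℝ] ℝ} {s : Set V} {u v : V}
    (hf : ConvexOn ℝ s f) (hf' : HasFDerivWithinAt f f' s u) (hu : u ∈ s) (hv : v ∈ s) :
    f u + f' (v - u) ≤ f v := by
  -- Optimality of `u` for the zero function, written as `-f + f`.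
  have hmin : IsMinOn (fun z => -f z + f z) s u := by simp [isMinOn_const]
  simpa only [neg_apply, sub_neg_eq_add] using
    sub_fderivWithin_le_of_isMinOn_add hf hf'.neg hmin hu hv

end FirstOrder

section ProximalGradient

variable {E : Type*} [NormedAddCommGroup E] [InnerProductSpace ℝ E]
  {L : ℝ} {f : E → ℝ} {f' : E → E} {φ : E → ℝ} {p : E → E}

/-- `f` is convex with `L`-Lipschitz gradient `f'`, the smooth part of a composite objective. The
gradient is a parameter and is expressed by `HasFDerivAt`, since `HasGradientAt` requires `E` to be
complete. -/
structure IsConvexSmooth (L : ℝ) (f : E → ℝ) (f' : E → E) : Prop where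
  convexOn : ConvexOn ℝ Set.univ f
  hasFDerivAt : ∀ z, HasFDerivAt f (innerSL ℝ (f' z)) z
  norm_sub_le : ∀ u v, ‖f' u - f' v‖ ≤ L * ‖u - v‖

namespace IsConvexSmooth

lemma add_inner_le (hf : IsConvexSmooth L f f') (u v : E) : f u + ⟪f' u, v - u⟫ ≤ f v :=
  add_fderivWithin_le_of_convexOn hf.convexOn (hf.hasFDerivAt u).hasFDerivWithinAt
    (Set.mem_univ u) (Set.mem_univ v)

lemma le_add_inner_add_sq (hf : IsConvexSmooth L f f') (u v : E) :
    f v ≤ f u + ⟪f' u, v - u⟫ + L / 2 * ‖v - u‖ ^ 2 := by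
  have hremainder := norm_sub_linearization_le_of_lipschitz hf.hasFDerivAt
    (fun z => by rw [← map_sub, innerSL_apply_norm]; exact hf.norm_sub_le z u) v
  have := (Real.le_norm_self _).trans hremainder
  rw [innerSL_apply_apply] at this
  linarith

lemma add_inner_add_sq_le (hf : IsConvexSmooth L f f') (hL : 0 < L) (u v : E) :
    f u + ⟪f' u, v - u⟫ + 1 / (2 * L) * ‖f' v - f' u‖ ^ 2 ≤ f v := by
  -- Compare the tangent at `u` with the quadratic upper model at `v`, at the point where the
  -- difference of the two is smallest.
  set D := f' v - f' u with hD
  have htangent := hf.add_inner_le u (v - L⁻¹ • D)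
  have hmodel := hf.le_add_inner_add_sq v (v - L⁻¹ • D)
  have hinner : ⟪f' v, D⟫ = ⟪f' u, D⟫ + ‖D‖ ^ 2 := by
    rw [← real_inner_self_eq_norm_sq, ← inner_add_left, hD, add_sub_cancel]
  rw [sub_right_comm, inner_sub_right, real_inner_smul_right] at htangent
  rw [sub_sub_cancel_left, inner_neg_right, real_inner_smul_right, hinner, norm_neg, norm_smul,
    Real.norm_of_nonneg (inv_nonneg.2 hL.le)] at hmodel
  have hcoeff : L / 2 * (L⁻¹ * ‖D‖) ^ 2 - L⁻¹ * ‖D‖ ^ 2 = -(1 / (2 * L) * ‖D‖ ^ 2) := by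
    field_simp; ring
  linarith

lemma norm_sub_sq_le_mul_inner (hf : IsConvexSmooth L f f') (hL : 0 < L) (u v : E) :
    ‖f' u - f' v‖ ^ 2 ≤ L * ⟪f' u - f' v, u - v⟫ := by
  have huv := hf.add_inner_add_sq_le hL u v
  have hvu := hf.add_inner_add_sq_le hL v u
  rw [norm_sub_rev, ← neg_sub u v, inner_neg_right] at huv
  calc ‖f' u - f' v‖ ^ 2 = L * (2 * (1 / (2 * L) * ‖f' u - f' v‖ ^ 2)) := by field_simp
    _ ≤ L * ⟪f' u - f' v, u - v⟫ := by
      rw [inner_sub_left]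
      gcongr
      linarith

lemma lipschitzWith_one_gradientStep (hf : IsConvexSmooth L f f') (hL : 0 < L) :
    LipschitzWith 1 fun u => u - L⁻¹ • f' u := by
  refine LipschitzWith.of_dist_le_mul fun u v => ?_
  rw [NNReal.coe_one, one_mul, dist_eq_norm, dist_eq_norm, sub_sub_sub_comm, ← smul_sub]
  refine (sq_le_sq₀ (norm_nonneg _) (norm_nonneg _)).1 ?_
  rw [norm_sub_sq_real, real_inner_smul_right, norm_smul, Real.norm_of_nonneg (inv_nonneg.2 hL.le),
    real_inner_comm]
  have hcoco : L⁻¹ ^ 2 * ‖f' u - f' v‖ ^ 2 ≤ L⁻¹ * ⟪f' u - f' v, u - v⟫ :=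
    calc L⁻¹ ^ 2 * ‖f' u - f' v‖ ^ 2
        ≤ L⁻¹ ^ 2 * (L * ⟪f' u - f' v, u - v⟫) := by
          gcongr; exact hf.norm_sub_sq_le_mul_inner hL u v
      _ = L⁻¹ * ⟪f' u - f' v, u - v⟫ := by field_simp
  nlinarith [sq_nonneg (L⁻¹ * ‖f' u - f' v‖)]

end IsConvexSmooth

/-- `p` is the proximal gradient map of `f + φ` with step size `1 / L`: it sends `y` to a minimizer
of the sum of `φ` and the quadratic model of `f` at `y`. -/
def IsProxGradMap (L : ℝ) (f : E → ℝ) (f' : E → E) (φ : E → ℝ) (p : E → E) : Prop :=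
  ∀ y, IsMinOn (fun z => f y + ⟪f' y, z - y⟫ + L / 2 * ‖z - y‖ ^ 2 + φ z) Set.univ (p y)

/-- `p` satisfies the proximal gradient inequality for the objective `F` with constant `L`; this is
all that the potential argument needs to know about `p`. -/
def HasProxGradInequality (L : ℝ) (F : E → ℝ) (p : E → E) : Prop :=
  ∀ y z, F (p y) ≤ F z - L / 2 * ‖y - p y‖ ^ 2 + L * ⟪y - z, y - p y⟫

lemma hasFDerivAt_quadraticModel (L c : ℝ) (g y w : E) :
    HasFDerivAt (fun z => c + ⟪g, z - y⟫ + L / 2 * ‖z - y‖ ^ 2)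
      (innerSL ℝ (g - L • (y - w))) w := by
  have hsub : HasFDerivAt (fun z => z - y) (ContinuousLinearMap.id ℝ E) w :=
    (hasFDerivAt_id w).sub_const y
  refine ((((innerSL ℝ g).hasFDerivAt.comp w hsub).const_add c).add
    (hsub.norm_sq.const_mul (L / 2))).congr_fderiv ?_
  ext d
  simp
  ring

namespace IsProxGradMap

lemma add_inner_le (hp : IsProxGradMap L f f' φ p) (hφ : ConvexOn ℝ Set.univ φ) (y z : E) :
    φ (p y) + ⟪L • (y - p y) - f' y, z - p y⟫ ≤ φ z := by
  have hopt := sub_fderivWithin_le_of_isMinOn_add hφ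
    (hasFDerivAt_quadraticModel L (f y) (f' y) y (p y)).hasFDerivWithinAt (hp y)
    (Set.mem_univ _) (Set.mem_univ z)
  rwa [innerSL_apply_apply, sub_eq_add_neg, ← inner_neg_left, neg_sub] at hopt

lemma hasProxGradInequality (hp : IsProxGradMap L f f' φ p) (hf : IsConvexSmooth L f f')
    (hφ : ConvexOn ℝ Set.univ φ) : HasProxGradInequality L (fun z => f z + φ z) p := by
  intro y z
  have hmodel := hf.le_add_inner_add_sq y (p y)
  have htangent := hf.add_inner_le y z
  have hsubgrad := hp.add_inner_le hφ y z
  have hsplit : z - p y = (z - y) - (p y - y) := (sub_sub_sub_cancel_right z (p y) y).symm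
  have hnorm : ⟪y - p y, z - p y⟫ = ‖y - p y‖ ^ 2 - ⟪y - z, y - p y⟫ := by
    rw [← real_inner_self_eq_norm_sq, real_inner_comm, ← inner_sub_left, sub_sub_sub_cancel_left]
  rw [inner_sub_left, real_inner_smul_left, hnorm, hsplit, inner_sub_right (f' y)] at hsubgrad
  rw [norm_sub_rev] at hmodel
  linarith

lemma dist_le_dist_gradientStep (hp : IsProxGradMap L f f' φ p) (hL : 0 < L)
    (hφ : ConvexOn ℝ Set.univ φ) (u v : E) :
    dist (p u) (p v) ≤ dist (u - L⁻¹ • f' u) (v - L⁻¹ • f' v) := by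
  rw [dist_eq_norm, dist_eq_norm]
  set G := u - L⁻¹ • f' u - (v - L⁻¹ • f' v) with hG
  set P := p u - p v with hP
  -- Monotonicity of the subdifferential of `φ`.
  have hmono : 0 ≤ ⟪(L • (u - p u) - f' u) - (L • (v - p v) - f' v), P⟫ := by
    have hu := hp.add_inner_le hφ u (p v)
    have hv := hp.add_inner_le hφ v (p u)
    rw [← neg_sub (p u) (p v), inner_neg_right] at hu
    rw [inner_sub_left]
    linarith
  have hfirm : ‖P‖ ^ 2 ≤ ⟪G, P⟫ := by
    have hscale : (L • (u - p u) - f' u) - (L • (v - p v) - f' v) = L • (G - P) := by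
      rw [hG, hP]
      match_scalars <;> field_simp
    rw [hscale, real_inner_smul_left, inner_sub_left, real_inner_self_eq_norm_sq] at hmono
    exact sub_nonneg.1 (nonneg_of_mul_nonneg_right hmono hL)
  rcases (norm_nonneg P).eq_or_lt with hP_zero | hP_pos
  · exact hP_zero ▸ norm_nonneg G
  · exact le_of_mul_le_mul_right (by linarith [real_inner_le_norm G P, sq ‖P‖]) hP_pos

lemma lipschitzWith_one (hp : IsProxGradMap L f f' φ p) (hL : 0 < L) (hf : IsConvexSmooth L f f')
    (hφ : ConvexOn ℝ Set.univ φ) : LipschitzWith 1 p :=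
  LipschitzWith.of_dist_le_mul fun u v => (hp.dist_le_dist_gradientStep hL hφ u v).trans
    ((hf.lipschitzWith_one_gradientStep hL).dist_le_mul u v)

end IsProxGradMap

lemma HasProxGradInequality.sq_residual_le {F : E → ℝ} {z : E} (hF : HasProxGradInequality L F p)
    (hz : IsMinOn F Set.univ z) (x : E) : L / 2 * ‖x - p x‖ ^ 2 ≤ F x - F z := by
  have hdecrease := hF x x
  rw [sub_self, inner_zero_left] at hdecrease
  linarith [isMinOn_iff.1 hz (p x) (Set.mem_univ _)]

end ProximalGradient

section GFPGM

variable {E : Type*} [NormedAddCommGroup E] [InnerProductSpace ℝ E]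

/-- The partial sums `T i = t 0 + ⋯ + t i` of the GFPGM parameters, the last index included. -/
def stepSum (t : ℕ → ℝ) (i : ℕ) : ℝ := ∑ l ∈ Finset.range (i + 1), t l

/-- `x` and `y` are the primary and secondary iterates of the generalized fast proximal gradient
method for the proximal gradient map `p`, with parameters `t`. -/
structure IsGFPGM (p : E → E) (t : ℕ → ℝ) (x y : ℕ → E) : Prop where
  y_zero : y 0 = x 0
  x_succ : ∀ i, x (i + 1) = p (y i)
  y_succ : ∀ i, y (i + 1) = x (i + 1)
    + ((stepSum t i - t i) * t (i + 1) / (t i * stepSum t (i + 1))) • (x (i + 1) - x i)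
    + ((t i ^ 2 - stepSum t i) * t (i + 1) / (t i * stepSum t (i + 1))) • (x (i + 1) - y i)

/-- The auxiliary point `v i = (t i)⁻¹ (T i y i - (T i - t i) x i)` of GFPGM, whose distance to a
minimizer enters the potential. -/
noncomputable def auxPoint (t : ℕ → ℝ) (x y : ℕ → E) (i : ℕ) : E :=
  (t i)⁻¹ • (stepSum t i • y i - (stepSum t i - t i) • x i)

/-- The potential of GFPGM for the objective `F`, relative to the comparison point `z`. -/
noncomputable def potential (L : ℝ) (F : E → ℝ) (z : E) (t : ℕ → ℝ) (x y : ℕ → E) (i : ℕ) : ℝ :=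
  (stepSum t i - t i) * (F (x i) - F z) + L / 2 * ‖auxPoint t x y i - z‖ ^ 2

/-- The total weight that `N` steps of GFPGM put on the squared residuals at `x N` (first summand)
and at `y 0, …, y (N - 1)`. -/
def totalWeight (t : ℕ → ℝ) (N : ℕ) : ℝ :=
  stepSum t N - t N + ∑ i ∈ Finset.range N, (stepSum t i - t i ^ 2)

variable {L : ℝ} {F : E → ℝ} {p : E → E} {t : ℕ → ℝ} {x y : ℕ → E} {z : E}

lemma stepSum_zero (t : ℕ → ℝ) : stepSum t 0 = t 0 := by simp [stepSum]

lemma stepSum_succ (t : ℕ → ℝ) (i : ℕ) : stepSum t (i + 1) = stepSum t i + t (i + 1) :=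
  Finset.sum_range_succ t (i + 1)

lemma stepSum_pos (ht : ∀ i, 0 < t i) (i : ℕ) : 0 < stepSum t i :=
  Finset.sum_pos (fun l _ => ht l) Finset.nonempty_range_add_one

lemma le_stepSum (ht : ∀ i, 0 ≤ t i) (i : ℕ) : t i ≤ stepSum t i :=
  Finset.single_le_sum (fun l _ => ht l) (Finset.self_mem_range_succ i)

lemma totalWeight_succ (t : ℕ → ℝ) (N : ℕ) :
    totalWeight t (N + 1) = totalWeight t N + stepSum t N + t N - t N ^ 2 := by
  rw [totalWeight, totalWeight, stepSum_succ, Finset.sum_range_succ]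
  ring

namespace IsGFPGM

lemma auxPoint_succ (h : IsGFPGM p t x y) (ht : ∀ i, 0 < t i) (i : ℕ) :
    auxPoint t x y (i + 1) = auxPoint t x y i - t i • (y i - p (y i)) := by
  have hti := (ht i).ne'
  have hti_succ := (ht (i + 1)).ne'
  have hTi_succ := (stepSum_pos ht (i + 1)).ne'
  rw [auxPoint, auxPoint, h.y_succ i, ← h.x_succ i]
  match_scalars
  · field_simp
    rw [stepSum_succ]
    ring
  · field_simp
  · field_simp
    ring

lemma potential_zero (h : IsGFPGM p t x y) (ht : t 0 ≠ 0) :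
    potential L F z t x y 0 = L / 2 * ‖x 0 - z‖ ^ 2 := by
  simp [potential, auxPoint, stepSum_zero, h.y_zero, inv_smul_smul₀ ht]

lemma potential_succ_add_le (h : IsGFPGM p t x y) (hF : HasProxGradInequality L F p)
    (ht : ∀ i, 0 < t i) (z : E) (i : ℕ) :
    potential L F z t x y (i + 1) + L / 2 * ((stepSum t i - t i ^ 2) * ‖y i - p (y i)‖ ^ 2)
      ≤ potential L F z t x y i := by
  have hx := mul_le_mul_of_nonneg_left (hF (y i) (x i))
    (sub_nonneg.2 (le_stepSum (fun l => (ht l).le) i))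
  have hz := mul_le_mul_of_nonneg_left (hF (y i) z) (ht i).le
  rw [potential, potential, h.auxPoint_succ ht, h.x_succ, stepSum_succ, add_sub_cancel_right]
  set g := y i - p (y i)
  set v := auxPoint t x y i with hv
  have haux : t i • (v - z) = (stepSum t i - t i) • (y i - x i) + t i • (y i - z) := by
    rw [hv, auxPoint, smul_sub, smul_inv_smul₀ (ht i).ne']
    module
  have hinner : t i * ⟪v - z, g⟫ = (stepSum t i - t i) * ⟪y i - x i, g⟫ + t i * ⟪y i - z, g⟫ := by
    simp only [← real_inner_smul_left, ← inner_add_left, haux]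
  rw [sub_right_comm v, norm_sub_sq_real (v - z), real_inner_smul_right, norm_smul,
    mul_pow, Real.norm_eq_abs, sq_abs]
  linear_combination hx + hz - L * hinner

lemma potential_add_sum_le (h : IsGFPGM p t x y) (hF : HasProxGradInequality L F p)
    (ht : ∀ i, 0 < t i) (z : E) (N : ℕ) :
    potential L F z t x y N
        + L / 2 * ∑ i ∈ Finset.range N, (stepSum t i - t i ^ 2) * ‖y i - p (y i)‖ ^ 2
      ≤ L / 2 * ‖x 0 - z‖ ^ 2 := by
  induction N with
  | zero => simp [h.potential_zero (ht 0).ne']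
  | succ N ih =>
    rw [Finset.sum_range_succ]
    linarith [h.potential_succ_add_le hF ht z N]

lemma weighted_sum_sq_residual_le (h : IsGFPGM p t x y) (hL : 0 < L)
    (hF : HasProxGradInequality L F p) (ht : ∀ i, 0 < t i) (hz : IsMinOn F Set.univ z) (N : ℕ) :
    (stepSum t N - t N) * ‖x N - p (x N)‖ ^ 2
        + ∑ i ∈ Finset.range N, (stepSum t i - t i ^ 2) * ‖y i - p (y i)‖ ^ 2
      ≤ ‖x 0 - z‖ ^ 2 := by
  have hlast := mul_le_mul_of_nonneg_left (hF.sq_residual_le hz (x N))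
    (sub_nonneg.2 (le_stepSum (fun l => (ht l).le) N))
  have hsum := h.potential_add_sum_le hF ht z N
  have hdist : 0 ≤ L / 2 * ‖auxPoint t x y N - z‖ ^ 2 := by positivity
  rw [potential] at hsum
  refine le_of_mul_le_mul_left ?_ (half_pos hL)
  linarith

lemma sq_mul_totalWeight_le (h : IsGFPGM p t x y) (hL : 0 < L) (hF : HasProxGradInequality L F p)
    (ht : ∀ i, 0 < t i) (hz : IsMinOn F Set.univ z) {N : ℕ} (htN : ∀ i < N, t i ^ 2 ≤ stepSum t i)
    {r : ℝ} (hr : 0 ≤ r) (hry : ∀ i < N, r ≤ ‖y i - p (y i)‖) (hrx : r ≤ ‖x N - p (x N)‖) :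
    r ^ 2 * totalWeight t N ≤ ‖x 0 - z‖ ^ 2 := by
  refine le_trans ?_ (h.weighted_sum_sq_residual_le hL hF ht hz N)
  rw [totalWeight, mul_comm, add_mul, Finset.sum_mul]
  gcongr with i hi
  · exact sub_nonneg.2 (le_stepSum (fun l => (ht l).le) N)
  · exact sub_nonneg.2 (htN i (Finset.mem_range.1 hi))
  · exact hry i (Finset.mem_range.1 hi)

theorem min_residual_le (h : IsGFPGM p t x y) (hL : 0 < L) (hF : HasProxGradInequality L F p)
    (ht : ∀ i, 0 < t i) (hz : IsMinOn F Set.univ z) {N : ℕ} (htN : ∀ i < N, t i ^ 2 ≤ stepSum t i)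
    (hW : 0 < totalWeight t N) (hN : (Finset.range N).Nonempty) :
    min ((Finset.range N).inf' hN fun i => L * ‖y i - p (y i)‖) (L * ‖x N - p (x N)‖)
      ≤ L * ‖x 0 - z‖ / √(totalWeight t N) := by
  set m := min ((Finset.range N).inf' hN fun i => L * ‖y i - p (y i)‖) (L * ‖x N - p (x N)‖)
  have hm : 0 ≤ m := le_min (Finset.le_inf' _ _ fun i _ => by positivity) (by positivity)
  have hy : ∀ i < N, m / L ≤ ‖y i - p (y i)‖ := fun i hi =>
    (div_le_iff₀' hL).2 <| (min_le_left _ _).trans (Finset.inf'_le _ (Finset.mem_range.2 hi))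
  have hx : m / L ≤ ‖x N - p (x N)‖ := (div_le_iff₀' hL).2 (min_le_right _ _)
  have hsq := h.sq_mul_totalWeight_le hL hF ht hz htN (div_nonneg hm hL.le) hy hx
  rw [mul_div_assoc, ← div_le_iff₀' hL, le_div_iff₀ (Real.sqrt_pos.2 hW)]
  refine (sq_le_sq₀ (by positivity) (norm_nonneg _)).1 ?_
  rwa [mul_pow, Real.sq_sqrt hW.le]

lemma min_residual_x_le (h : IsGFPGM p t x y) (hL : 0 ≤ L) (hp : LipschitzWith 1 p) {N : ℕ}
    (hN : (Finset.range N).Nonempty) :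
    (Finset.range (N + 1)).inf' Finset.nonempty_range_add_one (fun i => L * ‖x i - p (x i)‖)
      ≤ min ((Finset.range N).inf' hN fun i => L * ‖y i - p (y i)‖) (L * ‖x N - p (x N)‖) := by
  refine le_min (Finset.le_inf' _ _ fun i hi => ?_)
    (Finset.inf'_le _ (Finset.self_mem_range_succ N))
  calc _ ≤ L * ‖x (i + 1) - p (x (i + 1))‖ :=
        Finset.inf'_le _ (Finset.mem_range.2 (Nat.succ_lt_succ (Finset.mem_range.1 hi)))
    _ ≤ L * ‖y i - p (y i)‖ := by
        rw [h.x_succ]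
        gcongr
        simpa [dist_eq_norm] using hp.dist_le_mul (y i) (p (y i))

end IsGFPGM

end GFPGM

section LinearParameters

/-- The parameters `t i = (i + a) / a` of FPGM-a. -/
noncomputable def fpgmStep (a : ℝ) (i : ℕ) : ℝ := ((i : ℝ) + a) / a

variable {a : ℝ}

lemma fpgmStep_pos (ha : 0 < a) (i : ℕ) : 0 < fpgmStep a i := by
  rw [fpgmStep]; positivity

lemma stepSum_fpgmStep (ha : a ≠ 0) (i : ℕ) :
    stepSum (fpgmStep a) i = ((i : ℝ) + 1) * (i + 2 * a) / (2 * a) := by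
  induction i with
  | zero => rw [stepSum_zero, fpgmStep]; push_cast; field_simp; ring
  | succ i ih => rw [stepSum_succ, ih, fpgmStep]; push_cast; field_simp; ring

lemma sq_fpgmStep_le_stepSum (ha : 2 ≤ a) (i : ℕ) :
    fpgmStep a i ^ 2 ≤ stepSum (fpgmStep a) i := by
  have ha_pos : 0 < a := by linarith
  have hdiff : stepSum (fpgmStep a) i - fpgmStep a i ^ 2
      = ((a - 2) * (i : ℝ) ^ 2 + a * (2 * a - 3) * i) / (2 * a ^ 2) := by
    rw [stepSum_fpgmStep ha_pos.ne', fpgmStep]; field_simp; ring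
  have : 0 ≤ a - 2 := sub_nonneg.2 ha
  have : 0 ≤ 2 * a - 3 := by linarith
  rw [← sub_nonneg, hdiff]
  positivity

lemma totalWeight_fpgmStep (ha : a ≠ 0) (N : ℕ) :
    totalWeight (fpgmStep a) N = (N : ℝ) * ((a - 2) * (N : ℝ) ^ 2
      + 3 * (a ^ 2 - a + 1) * (N : ℝ) + (3 * a ^ 2 + 2 * a - 1)) / (6 * a ^ 2) := by
  induction N with
  | zero => simp [totalWeight, stepSum_zero]
  | succ N ih =>
    rw [totalWeight_succ, ih, stepSum_fpgmStep ha, fpgmStep]; push_cast; field_simp; ring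

lemma totalWeight_fpgmStep_pos (ha : 2 ≤ a) {N : ℕ} (hN : 0 < N) :
    0 < totalWeight (fpgmStep a) N := by
  have ha_pos : 0 < a := by linarith
  have : 0 ≤ a - 2 := sub_nonneg.2 ha
  have : 0 < a ^ 2 - a + 1 := by nlinarith
  have : 0 < 3 * a ^ 2 + 2 * a - 1 := by nlinarith
  rw [totalWeight_fpgmStep ha_pos.ne']
  positivity

lemma sqrt_totalWeight_fpgmStep (ha : 0 < a) (N : ℕ) :
    √(totalWeight (fpgmStep a) N) = √((N : ℝ) * ((a - 2) * (N : ℝ) ^ 2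
      + 3 * (a ^ 2 - a + 1) * (N : ℝ) + (3 * a ^ 2 + 2 * a - 1))) / (a * √6) := by
  rw [totalWeight_fpgmStep ha.ne', Real.sqrt_div' _ (by positivity), mul_comm 6,
    Real.sqrt_mul (sq_nonneg a), Real.sqrt_sq ha.le]

end LinearParameters

/-- FPGM-a (GFPGM with t_i = (i+a)/a, a ≥ 2) satisfies, for N ≥ 1,
min_{0≤i≤N} ‖∇̃F(x_i)‖ ≤ min( min_{0≤i≤N−1} ‖∇̃F(y_i)‖, ‖∇̃F(x_N)‖ )
≤ a√6·LR/√( N((a−2)N² + 3(a²−a+1)N + (3a²+2a−1)) ). -/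
theorem fpgm_a_cgm_bound
    {E : Type*} [NormedAddCommGroup E] [InnerProductSpace ℝ E]
    (L : ℝ) (hL : 0 < L)
    (f : E → ℝ) (f' : E → E) (φ : E → ℝ)
    (hf : ConvexOn ℝ Set.univ f)
    (hgrad : ∀ z : E, HasFDerivAt f (innerSL ℝ (f' z)) z)
    (hLip : ∀ u v : E, ‖f' u - f' v‖ ≤ L * ‖u - v‖)
    (hφ : ConvexOn ℝ Set.univ φ)
    (p : E → E)
    (hp : ∀ y : E, IsMinOn
      (fun z => f y + ⟪f' y, z - y⟫ + L / 2 * ‖z - y‖ ^ 2 + φ z) Set.univ (p y))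
    (xs : E) (hxs : IsMinOn (fun z => f z + φ z) Set.univ xs)
    (R : ℝ) (hR0 : 0 ≤ R)
    (a : ℝ) (ha : 2 ≤ a)
    (t T : ℕ → ℝ) (ht : ∀ i, t i = ((i : ℝ) + a) / a)
    (hT : ∀ i, T i = ∑ l ∈ Finset.range (i + 1), t l)
    (x y : ℕ → E)
    (hy0 : y 0 = x 0)
    (hx : ∀ i, x (i + 1) = p (y i))
    (hy : ∀ i, y (i + 1) = x (i + 1)
        + ((T i - t i) * t (i + 1) / (t i * T (i + 1))) • (x (i + 1) - x i)
        + ((t i ^ 2 - T i) * t (i + 1) / (t i * T (i + 1))) • (x (i + 1) - y i))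
    (hR : ‖x 0 - xs‖ ≤ R)
    (N : ℕ) (hN : 1 ≤ N) :
    (Finset.range (N + 1)).inf' (Finset.nonempty_range_iff.mpr (Nat.succ_ne_zero N))
        (fun i => L * ‖x i - p (x i)‖)
      ≤ min ((Finset.range N).inf' (Finset.nonempty_range_iff.mpr (by omega))
          (fun i => L * ‖y i - p (y i)‖)) (L * ‖x N - p (x N)‖) ∧
    min ((Finset.range N).inf' (Finset.nonempty_range_iff.mpr (by omega))
          (fun i => L * ‖y i - p (y i)‖)) (L * ‖x N - p (x N)‖)
      ≤ a * Real.sqrt 6 * L * R / Real.sqrt ((N : ℝ) *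
          ((a - 2) * (N : ℝ) ^ 2 + 3 * (a ^ 2 - a + 1) * (N : ℝ) + (3 * a ^ 2 + 2 * a - 1))) := by
  have ha_pos : 0 < a := by linarith
  obtain rfl : t = fpgmStep a := funext ht
  obtain rfl : T = stepSum (fpgmStep a) := funext hT
  have hsmooth : IsConvexSmooth L f f' := ⟨hf, hgrad, hLip⟩
  have hprox : IsProxGradMap L f f' φ p := hp
  have hiter : IsGFPGM p (fpgmStep a) x y := ⟨hy0, hx, hy⟩
  refine ⟨hiter.min_residual_x_le hL.le (hprox.lipschitzWith_one hL hsmooth hφ) _, ?_⟩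
  refine (hiter.min_residual_le hL (hprox.hasProxGradInequality hsmooth hφ)
    (fpgmStep_pos ha_pos) hxs (fun i _ => sq_fpgmStep_le_stepSum ha i)
    (totalWeight_fpgmStep_pos ha hN) _).trans ?_
  rw [sqrt_totalWeight_fpgmStep ha_pos, div_div_eq_mul_div]
  gcongr ?_ / _
  calc L * ‖x 0 - xs‖ * (a * √6) ≤ L * R * (a * √6) := by gcongr
    _ = a * √6 * L * R := by ring
end

section
/- For the FPGM-OPG parameters with any integer N ≥ 1, Σ_{k=0}^{N−1} (T_k − t_k²) + T_{N−1} ≥ (N − 2)N² / 24. -/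
/-!
Summation by parts turns the left-hand side into `∑_{k < N} t_k (N + 1 - k - t_k)`. The second half
of the parameters, `t_k = (N + 1 - k) / 2`, maximizes each summand, and so contributes a sum of
squares. On the first half the recursion, in the form `t_{k+1}² = t_{k+1} + t_k²`, makes the sum
telescope to `(M + 1) t_n²`, where `n` is the last index of the first half and `M = N - n - 1`;
there `t_n ≥ (n + 2) / 2`. What remains is a polynomial inequality whose cubic part is
`0 ≤ (M - (n + 1))³`; when `n ≤ M` this fails by at most `1`, which the lower order terms absorb.
-/

open Finset

/-- Nesterov's momentum sequence `1, (1 + √5) / 2, …`, which the FPGM-OPG parameters follow up to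
index `⌈N/2⌉ - 1`. -/
noncomputable def nesterovMomentum : ℕ → ℝ
  | 0 => 1
  | k + 1 => (1 + √(1 + 4 * nesterovMomentum k ^ 2)) / 2

namespace nesterovMomentum

lemma succ_sq (k : ℕ) :
    nesterovMomentum (k + 1) ^ 2 = nesterovMomentum (k + 1) + nesterovMomentum k ^ 2 := by
  have hsqrt : √(1 + 4 * nesterovMomentum k ^ 2) ^ 2 = 1 + 4 * nesterovMomentum k ^ 2 :=
    Real.sq_sqrt (by positivity)
  rw [nesterovMomentum]
  linear_combination hsqrt / 4

lemma add_half_le_succ (k : ℕ) : nesterovMomentum k + 1 / 2 ≤ nesterovMomentum (k + 1) := by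
  have hsqrt : 2 * nesterovMomentum k ≤ √(1 + 4 * nesterovMomentum k ^ 2) :=
    Real.le_sqrt_of_sq_le (by linarith)
  rw [nesterovMomentum]
  linarith

lemma add_two_div_two_le (k : ℕ) : ((k : ℝ) + 2) / 2 ≤ nesterovMomentum k := by
  induction k with
  | zero => norm_num [nesterovMomentum]
  | succ k ih =>
    push_cast
    linarith [add_half_le_succ k]

lemma sum_mul_sub (c : ℝ) (n : ℕ) :
    ∑ k ∈ range (n + 1), nesterovMomentum k * (c - k - nesterovMomentum k) =
      (c - (n + 1)) * nesterovMomentum n ^ 2 := by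
  induction n with
  | zero => simp [nesterovMomentum]
  | succ n ih =>
    rw [sum_range_succ, ih]
    push_cast
    linear_combination (n + 1 - c) * succ_sq n

end nesterovMomentum

lemma sum_partialSum_sub_sq_add_sum {R : Type*} [CommRing R] (t : ℕ → R) (n : ℕ) :
    ∑ k ∈ range n, (∑ l ∈ range (k + 1), t l - t k ^ 2) + ∑ l ∈ range n, t l =
      ∑ k ∈ range n, t k * (n + 1 - k - t k) := by
  induction n with
  | zero => simp
  | succ n ih =>
    have shift : ∑ k ∈ range n, t k * ((n + 1 : ℕ) + 1 - k - t k) =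
        ∑ k ∈ range n, t k * (n + 1 - k - t k) + ∑ k ∈ range n, t k := by
      rw [← sum_add_distrib]
      refine sum_congr rfl fun k _ ↦ ?_
      push_cast
      ring
    rw [sum_range_succ _ n, sum_range_succ _ n, sum_range_succ _ n, shift, ← ih]
    push_cast
    ring

lemma sum_range_add_one_sub_sq {K : Type*} [Field K] [CharZero K] (n : ℕ) :
    ∑ j ∈ range n, ((n : K) + 1 - j) ^ 2 = ((n : K) + 1) * (n + 2) * (2 * n + 3) / 6 - 1 := by
  induction n with
  | zero => norm_num
  | succ n ih =>
    have shift (j : ℕ) : ((n + 1 : ℕ) : K) + 1 - (j + 1 : ℕ) = n + 1 - j := by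
      push_cast
      ring
    simp only [sum_range_succ', shift, ih]
    push_cast
    ring

lemma sum_mul_sub_of_nesterovMomentum_of_half {t : ℕ → ℝ} {n M : ℕ}
    (head : ∀ k ≤ n, t k = nesterovMomentum k)
    (tail : ∀ j < M, t (n + 1 + j) = ((M : ℝ) + 1 - j) / 2) :
    ∑ k ∈ range (n + 1 + M), t k * ((n + 1 + M : ℕ) + 1 - k - t k) =
      (M + 1) * nesterovMomentum n ^ 2 + ((M + 1) * (M + 2) * (2 * M + 3) / 6 - 1) / 4 := by
  rw [sum_range_add]
  congr 1
  · calc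
      _ = ∑ k ∈ range (n + 1), nesterovMomentum k *
            (((n + 1 + M : ℕ) : ℝ) + 1 - k - nesterovMomentum k) :=
        sum_congr rfl fun k hk ↦ by rw [head k (mem_range_succ_iff.mp hk)]
      _ = (M + 1) * nesterovMomentum n ^ 2 := by
        rw [nesterovMomentum.sum_mul_sub]
        push_cast
        ring
  · rw [← sum_range_add_one_sub_sq, sum_div]
    refine sum_congr rfl fun j hj ↦ ?_
    rw [tail j (mem_range.mp hj)]
    push_cast
    ring

lemma sub_two_mul_sq_div_le {m M : ℝ} (hm : 0 ≤ m) (hM : 0 ≤ M) (hmM : m ≤ M + 1) :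
    (m + M - 2) * (m + M) ^ 2 / 24 ≤
      (M + 1) * ((m + 1) / 2) ^ 2 + ((M + 1) * (M + 2) * (2 * M + 3) / 6 - 1) / 4 := by
  have cube : (-1) ^ 3 ≤ (M - m) ^ 3 := (Odd.strictMono_pow (by decide)).monotone (by linarith)
  have lower_order : 0 ≤ 8 * m ^ 2 + 16 * (m * M) + 11 * M ^ 2 + 12 * m + 19 * M := by positivity
  linarith

/-- the FPGM-OPG parameters satisfy
Σ_{k=0}^{N−1}(T_k − t_k²) + T_{N−1} ≥ (N−2)N²/24. -/
theorem fpgm_opg_parameter_sum_lower_bound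
    (N : ℕ) (hN : 1 ≤ N)
    (t T : ℕ → ℝ) (ht0 : t 0 = 1)
    (ht1 : ∀ i, i + 2 ≤ (N + 1) / 2 → t (i + 1) = (1 + Real.sqrt (1 + 4 * t i ^ 2)) / 2)
    (ht2 : ∀ i, (N + 1) / 2 ≤ i + 1 → i + 2 ≤ N → t (i + 1) = ((N : ℝ) - i) / 2)
    (hT : ∀ i, T i = ∑ l ∈ Finset.range (i + 1), t l) :
    ((N : ℝ) - 2) * (N : ℝ) ^ 2 / 24
      ≤ ∑ k ∈ Finset.range N, (T k - t k ^ 2) + T (N - 1) := by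
  obtain ⟨n, M, hn, rfl, hnM⟩ : ∃ n M, (N + 1) / 2 = n + 1 ∧ N = n + 1 + M ∧ n ≤ M :=
    ⟨(N + 1) / 2 - 1, N - (N + 1) / 2, by omega, by omega, by omega⟩
  have head (k : ℕ) (hk : k ≤ n) : t k = nesterovMomentum k := by
    induction k with
    | zero => rw [ht0, nesterovMomentum]
    | succ k ih => rw [ht1 k (by omega), ih (by omega), nesterovMomentum]
  have tail (j : ℕ) (hj : j < M) : t (n + 1 + j) = ((M : ℝ) + 1 - j) / 2 := by
    rw [show n + 1 + j = n + j + 1 by omega, ht2 (n + j) (by omega) (by omega)]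
    push_cast
    ring
  have growth := nesterovMomentum.add_two_div_two_le n
  simp only [hT, Nat.sub_add_cancel hN]
  rw [sum_partialSum_sub_sq_add_sum, sum_mul_sub_of_nesterovMomentum_of_half head tail]
  calc
    _ ≤ (M + 1) * (((n + 1 : ℝ) + 1) / 2) ^ 2 + ((M + 1) * (M + 2) * (2 * M + 3) / 6 - 1) / 4 := by
      push_cast
      exact sub_two_mul_sq_div_le (by positivity) M.cast_nonneg (by exact_mod_cast (by omega))
    _ ≤ _ := by
      gcongr
      linarith
end

section
/- For the FPGM-OPG parameters with any integer N ≥ 1, T_{N−1} ≥ (2N² + 8N + 1)/16. -/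
/-!
Up to the switch index `h`, the parameters grow by at least `1/2` at each step, because
`2 x ≤ √(1 + 4 x²)`; starting from `1`, these `h` terms contribute at least `h (h + 3) / 4`. The
remaining `m = N - h` terms descend from `(m + 1) / 2` to `1` in steps of `1/2` and contribute
`m (m + 3) / 4`. Since `(h + m)² ≤ 2 (h² + m²)`, the total is at least `N (N + 6) / 8`, wherever
the switch takes place.
-/

open Finset

theorem add_nsmul_le_of_add_le_succ {M : Type*} [AddMonoid M] [Preorder M] [AddRightMono M]
    {f : ℕ → M} {d : M} {n : ℕ} (hf : ∀ i < n, f i + d ≤ f (i + 1)) : f 0 + n • d ≤ f n := by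
  induction n with
  | zero => simp
  | succ n ih =>
    calc f 0 + (n + 1) • d = f 0 + n • d + d := by rw [succ_nsmul, add_assoc]
      _ ≤ f n + d := by gcongr; exact ih fun i hi ↦ hf i (by lia)
      _ ≤ f (n + 1) := hf n n.lt_succ_self

theorem sum_range_add_mul {K : Type*} [Field K] [NeZero (2 : K)] (a d : K) (n : ℕ) :
    ∑ i ∈ range n, (a + i * d) = n * (2 * a + (n - 1) * d) / 2 := by
  induction n with
  | zero => simp
  | succ n ih =>
    rw [sum_range_succ, ih]
    field_simp
    push_cast
    ring

theorem add_half_le_one_add_sqrt_div_two (x : ℝ) :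
    x + 1 / 2 ≤ (1 + √(1 + 4 * x ^ 2)) / 2 := by
  have : 2 * x ≤ √(1 + 4 * x ^ 2) := Real.le_sqrt_of_sq_le (by linarith)
  linarith

section LinearOrderedField

variable {K : Type*} [Field K] [LinearOrder K] [IsStrictOrderedRing K]

theorem le_sum_range_of_add_le_succ {f : ℕ → K} {d : K} {n : ℕ}
    (hf : ∀ i, i + 1 < n → f i + d ≤ f (i + 1)) :
    n * (2 * f 0 + (n - 1) * d) / 2 ≤ ∑ i ∈ range n, f i := by
  rw [← sum_range_add_mul]
  refine sum_le_sum fun i hi ↦ ?_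
  rw [← nsmul_eq_mul]
  exact add_nsmul_le_of_add_le_succ fun j hj ↦ hf j (by have := mem_range.1 hi; lia)

theorem fpgm_opg_parameter_T_lower_bound_general {N h : ℕ} (hh : 1 ≤ h) (hhN : h ≤ N)
    {t : ℕ → K} (ht0 : 1 ≤ t 0)
    (ht1 : ∀ i, i + 2 ≤ h → t i + 1 / 2 ≤ t (i + 1))
    (ht2 : ∀ i, h ≤ i + 1 → i + 2 ≤ N → ((N : K) - i) / 2 ≤ t (i + 1)) :
    (N : K) * (N + 6) / 8 ≤ ∑ i ∈ range N, t i := by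
  obtain ⟨m, rfl⟩ := Nat.exists_eq_add_of_le hhN
  have head : (h : K) * (h + 3) / 4 ≤ ∑ i ∈ range h, t i := by
    calc (h : K) * (h + 3) / 4 = h * (2 * 1 + (h - 1) * (1 / 2)) / 2 := by ring
      _ ≤ h * (2 * t 0 + (h - 1) * (1 / 2)) / 2 := by gcongr
      _ ≤ ∑ i ∈ range h, t i := le_sum_range_of_add_le_succ ht1
  have tail_term (i : ℕ) (hi : i < m) : ((m : K) + 1) / 2 + i * (-1 / 2) ≤ t (h + i) := by
    obtain ⟨k, rfl⟩ := Nat.exists_eq_add_of_le' hh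
    calc ((m : K) + 1) / 2 + i * (-1 / 2) = (((k + 1 + m : ℕ) : K) - (k + i : ℕ)) / 2 := by
          push_cast; ring
      _ ≤ t (k + i + 1) := ht2 (k + i) (by lia) (by lia)
      _ = t (k + 1 + i) := by rw [add_right_comm]
  have tail : (m : K) * (m + 3) / 4 ≤ ∑ i ∈ range m, t (h + i) := by
    calc (m : K) * (m + 3) / 4 = ∑ i ∈ range m, (((m : K) + 1) / 2 + i * (-1 / 2)) := by
          rw [sum_range_add_mul]; ring
      _ ≤ ∑ i ∈ range m, t (h + i) := sum_le_sum fun i hi ↦ tail_term i (mem_range.1 hi)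
  calc ((h + m : ℕ) : K) * ((h + m : ℕ) + 6) / 8
      ≤ (h : K) * (h + 3) / 4 + m * (m + 3) / 4 := by
        push_cast
        linarith [add_sq_le (a := (h : K)) (b := m)]
    _ ≤ ∑ i ∈ range h, t i + ∑ i ∈ range m, t (h + i) := add_le_add head tail
    _ = ∑ i ∈ range (h + m), t i := (sum_range_add t h m).symm

end LinearOrderedField

/-- the FPGM-OPG parameters satisfy T_{N−1} ≥ (2N² + 8N + 1)/16. -/
theorem fpgm_opg_parameter_T_lower_bound
    (N : ℕ) (hN : 1 ≤ N)
    (t T : ℕ → ℝ) (ht0 : t 0 = 1)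
    (ht1 : ∀ i, i + 2 ≤ (N + 1) / 2 → t (i + 1) = (1 + Real.sqrt (1 + 4 * t i ^ 2)) / 2)
    (ht2 : ∀ i, (N + 1) / 2 ≤ i + 1 → i + 2 ≤ N → t (i + 1) = ((N : ℝ) - i) / 2)
    (hT : ∀ i, T i = ∑ l ∈ Finset.range (i + 1), t l) :
    (2 * (N : ℝ) ^ 2 + 8 * (N : ℝ) + 1) / 16 ≤ T (N - 1) := by
  have hN' : (1 : ℝ) ≤ N := Nat.one_le_cast.2 hN
  calc (2 * (N : ℝ) ^ 2 + 8 * (N : ℝ) + 1) / 16 ≤ N * (N + 6) / 8 := by linarith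
    _ ≤ ∑ l ∈ range N, t l :=
      fpgm_opg_parameter_T_lower_bound_general (h := (N + 1) / 2) (by lia) (by lia) ht0.ge
        (fun i hi ↦ (add_half_le_one_add_sqrt_div_two (t i)).trans_eq (ht1 i hi).symm)
        (fun i hi hiN ↦ (ht2 i hi hiN).ge)
    _ = T (N - 1) := by rw [hT, Nat.sub_add_cancel hN]
end

section
/- With h, λ, τ, γ, S as defined, the multipliers are dual-feasible: λ_i ≥ 0, τ_i ≥ 0, τ_0 = λ_1, λ_{N−1} + τ_{N−1} = 1, and λ_i − λ_{i+1} + τ_i = 0 for 1 ≤ i ≤ N−2; and the (N+1)×(N+1) symmetric block matrix [[S, τ/2], [τᵀ/2, γ/2]] equals (1/(2T_{N−1}))(diag(T̃ − t̃ ∘ t̃) + t̃ t̃ᵀ), where t̃ := (t_0, …, t_{N−1}, 1)ᵀ and T̃ := (T_0, …, T_{N−1}, 1)ᵀ, and in particular it is positive semidefinite. -/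
/-!
Write `x ⊙ y = (x yᵀ + y xᵀ) / 2`. Both `A_{i-1,i}` and `D_i` have the form `u_i ⊙ w`, hence so
does `T_{i-1} A_{i-1,i} + t_i D_i`, and the recursion for `h` says exactly that its second factor is
`T_i u_i / 2 + t_i p_{i-1}`, where `p_i = ∑_{k ≤ i} t_k u_k`. As
`p_i p_iᵀ = p_{i-1} p_{i-1}ᵀ + 2 t_i u_i ⊙ p_{i-1} + t_i² u_i u_iᵀ`, these terms telescope to
`2 T_{N-1} S = ∑ (T_i - t_i²) u_i u_iᵀ + p_{N-1} p_{N-1}ᵀ`. This uses nothing about the vectors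
`u_i`; for the standard basis the right-hand side is `diag(T - t ∘ t) + t tᵀ`.
-/

open Finset Matrix

/-- The relation between the parameters `t`, their partial sums `T` and the step coefficients `h`
of the generalized fast proximal gradient method. Only the entries `h j k` with `k < j` are
constrained. -/
structure IsGFPGMStep {K : Type*} [Field K] (t T : ℕ → K) (h : ℕ → ℕ → K) : Prop where
  partialSum : ∀ i, T i = ∑ l ∈ range (i + 1), t l
  diag : ∀ i, h (i + 1) i = 1 + (t i - 1) * t (i + 1) / T (i + 1)
  off : ∀ i, ∀ k < i, h (i + 1) k
    = t (i + 1) / T (i + 1) * (t k - ∑ j ∈ Icc (k + 1) i, h j k)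

/-- The combination `∑_{k < i} h_{i,k} x_k` of the gradients `x_k` along which the method moves in
its `i`-th step. -/
def stepDisplacement {K E : Type*} [Semiring K] [AddCommMonoid E] [Module K E]
    (h : ℕ → ℕ → K) (x : ℕ → E) (i : ℕ) : E :=
  ∑ k ∈ range i, h i k • x k

lemma sum_stepDisplacement {K E : Type*} [Semiring K] [AddCommMonoid E] [Module K E]
    (h : ℕ → ℕ → K) (x : ℕ → E) (i : ℕ) :
    ∑ j ∈ Icc 1 i, stepDisplacement h x j
      = ∑ k ∈ range i, (∑ j ∈ Icc (k + 1) i, h j k) • x k := by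
  simp only [stepDisplacement, sum_smul]
  refine sum_comm' fun j k => ?_
  simp only [mem_Icc, mem_range]
  omega

section Recursion

variable {K : Type*} [Field K] {t T : ℕ → K} {h : ℕ → ℕ → K}

lemma IsGFPGMStep.partialSum_zero (hstep : IsGFPGMStep t T h) : T 0 = t 0 := by
  rw [hstep.partialSum, sum_range_one]

lemma IsGFPGMStep.partialSum_succ (hstep : IsGFPGMStep t T h) (i : ℕ) :
    T (i + 1) = T i + t (i + 1) := by
  rw [hstep.partialSum, hstep.partialSum, sum_range_succ]

lemma IsGFPGMStep.partialSum_pred_add (hstep : IsGFPGMStep t T h) {i : ℕ} (hi : 1 ≤ i) :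
    T (i - 1) + t i = T i := by
  obtain ⟨k, rfl⟩ := Nat.exists_eq_add_of_le' hi
  exact (hstep.partialSum_succ k).symm

lemma IsGFPGMStep.partialSum_pos [LinearOrder K] [IsStrictOrderedRing K]
    (hstep : IsGFPGMStep t T h) (ht0 : 0 < t 0) (ht : ∀ i, 0 ≤ t i) (i : ℕ) : 0 < T i := by
  rw [hstep.partialSum]
  exact sum_pos' (fun l _ => ht l) ⟨0, mem_range.mpr i.succ_pos, ht0⟩

lemma IsGFPGMStep.multipliers_feasible [LinearOrder K] [IsStrictOrderedRing K]
    (hstep : IsGFPGMStep t T h) (ht0 : 0 < t 0) (ht : ∀ i, 0 ≤ t i) {N : ℕ} (hN : 2 ≤ N)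
    {lam tau : ℕ → K} (hlam : ∀ i, 1 ≤ i → i ≤ N - 1 → lam i = T (i - 1) / T (N - 1))
    (htau : ∀ i, i ≤ N - 1 → tau i = t i / T (N - 1)) :
    (∀ i, 1 ≤ i → i ≤ N - 1 → 0 ≤ lam i) ∧ (∀ i, i ≤ N - 1 → 0 ≤ tau i) ∧
      tau 0 = lam 1 ∧ lam (N - 1) + tau (N - 1) = 1 ∧
      ∀ i, 1 ≤ i → i ≤ N - 2 → lam i - lam (i + 1) + tau i = 0 := by
  have hTpos := hstep.partialSum_pos ht0 ht
  refine ⟨fun i h1 hi => ?_, fun i hi => ?_, ?_, ?_, fun i h1 hi => ?_⟩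
  · rw [hlam i h1 hi]
    exact div_nonneg (hTpos _).le (hTpos _).le
  · rw [htau i hi]
    exact div_nonneg (ht i) (hTpos _).le
  · rw [htau 0 (by omega), hlam 1 le_rfl (by omega), Nat.sub_self, hstep.partialSum_zero]
  · rw [hlam _ (by omega) le_rfl, htau _ le_rfl, ← add_div, hstep.partialSum_pred_add (by omega),
      div_self (hTpos _).ne']
  · rw [hlam i h1 (by omega), hlam (i + 1) (by omega) (by omega), htau i (by omega),
      Nat.add_sub_cancel, ← hstep.partialSum_pred_add h1]
    ring

variable {E : Type*} [AddCommGroup E] [Module K E]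

lemma IsGFPGMStep.smul_stepDisplacement (hstep : IsGFPGMStep t T h) (x : ℕ → E) {i : ℕ}
    (hT : T (i + 1) ≠ 0) :
    T (i + 1) • stepDisplacement h x (i + 1) = T i • x i
      + t (i + 1) • (∑ k ∈ range (i + 1), t k • x k - ∑ j ∈ Icc 1 i, stepDisplacement h x j) := by
  have hdiag : T (i + 1) * h (i + 1) i = T i + t (i + 1) * t i := by
    rw [hstep.diag, mul_add, mul_div_cancel₀ _ hT, hstep.partialSum_succ]
    ring
  have hoff : ∀ k ∈ range i, (T (i + 1) * h (i + 1) k) • x k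
      = t (i + 1) • (t k • x k - (∑ j ∈ Icc (k + 1) i, h j k) • x k) := fun k hk => by
    rw [hstep.off i k (mem_range.mp hk), ← sub_smul, smul_smul, ← mul_assoc, mul_div_cancel₀ _ hT]
  rw [sum_stepDisplacement, stepDisplacement, sum_range_succ, sum_range_succ, smul_add, smul_sum,
    smul_smul, hdiag]
  simp only [smul_smul]
  rw [sum_congr rfl hoff, ← smul_sum, sum_sub_distrib]
  module

end Recursion

section SymmOuter

variable {K ι : Type*} [Field K]

/-- The symmetrized outer product `x ⊙ y = (x yᵀ + y xᵀ) / 2`, as a bilinear map. -/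
def symmOuter : (ι → K) →ₗ[K] (ι → K) →ₗ[K] Matrix ι ι K :=
  (1 / 2 : K) • (vecMulVecBilin K K + (vecMulVecBilin K K).flip)

lemma symmOuter_apply (x y : ι → K) :
    symmOuter x y = (1 / 2 : K) • (vecMulVec x y + vecMulVec y x) :=
  rfl

lemma half_smul_vecMulVec_add_self (x y : ι → K) :
    (1 / 2 : K) • vecMulVec (x + y) (x + y)
      = (1 / 2 : K) • vecMulVec x x + symmOuter y x + (1 / 2 : K) • vecMulVec y y := by
  rw [symmOuter_apply, add_vecMulVec, vecMulVec_add, vecMulVec_add]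
  module

/-- The matrix `A_{i-1,i}`, which encodes the inequality between two consecutive iterates, for
arbitrary vectors `u`. It is meant for `1 ≤ i`: for `i = 0` the subtraction truncates. -/
def consecutiveMatrix (h : ℕ → ℕ → K) (u : ℕ → ι → K) (i : ℕ) : Matrix ι ι K :=
  (1 / 2 : K) • vecMulVec (u i) (u i)
    - (1 / 2 : K) • vecMulVec (u (i - 1)) (u i)
    - (1 / 2 : K) • vecMulVec (u i) (u (i - 1))
    + ∑ k ∈ range i, ((1 / 2 : K) * h i k) • (vecMulVec (u i) (u k) + vecMulVec (u k) (u i))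

/-- The matrix `D_i`, which encodes the inequality between the iterate `i` and the minimizer, for
arbitrary vectors `u`. -/
def anchorMatrix (h : ℕ → ℕ → K) (u : ℕ → ι → K) (i : ℕ) : Matrix ι ι K :=
  (1 / 2 : K) • vecMulVec (u i) (u i)
    + ∑ j ∈ Icc 1 i, ∑ k ∈ range j,
        ((1 / 2 : K) * h j k) • (vecMulVec (u i) (u k) + vecMulVec (u k) (u i))

/-- The matrix `S`, that of the dual certificate, for arbitrary multipliers `λ`, `τ` and vectors
`u`. -/
def dualMatrix (lam tau : ℕ → K) (h : ℕ → ℕ → K) (u : ℕ → ι → K) (N : ℕ) : Matrix ι ι K :=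
  ∑ i ∈ Icc 1 (N - 1), lam i • consecutiveMatrix h u i + ∑ i ∈ range N, tau i • anchorMatrix h u i

lemma symmOuter_stepDisplacement (h : ℕ → ℕ → K) (u : ℕ → ι → K) (x : ι → K) (j : ℕ) :
    symmOuter x (stepDisplacement h u j)
      = ∑ k ∈ range j, ((1 / 2 : K) * h j k) • (vecMulVec x (u k) + vecMulVec (u k) x) := by
  simp only [stepDisplacement, map_sum, map_smul, symmOuter_apply, smul_smul, mul_comm]

variable [NeZero (2 : K)]

lemma symmOuter_self (x : ι → K) : symmOuter x x = vecMulVec x x := by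
  rw [symmOuter_apply, ← two_smul K, smul_smul, one_div_mul_cancel two_ne_zero, one_smul]

lemma consecutiveMatrix_eq_symmOuter (h : ℕ → ℕ → K) (u : ℕ → ι → K) (i : ℕ) :
    consecutiveMatrix h u i
      = symmOuter (u i) ((1 / 2 : K) • u i - u (i - 1) + stepDisplacement h u i) := by
  rw [consecutiveMatrix, map_add, map_sub, map_smul, symmOuter_self, symmOuter_stepDisplacement,
    symmOuter_apply]
  module

lemma anchorMatrix_eq_symmOuter (h : ℕ → ℕ → K) (u : ℕ → ι → K) (i : ℕ) :
    anchorMatrix h u i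
      = symmOuter (u i) ((1 / 2 : K) • u i + ∑ j ∈ Icc 1 i, stepDisplacement h u j) := by
  simp only [anchorMatrix, map_add, map_smul, symmOuter_self, map_sum, symmOuter_stepDisplacement]

variable {t T : ℕ → K} {h : ℕ → ℕ → K}

lemma IsGFPGMStep.smul_consecutiveMatrix_add_smul_anchorMatrix (hstep : IsGFPGMStep t T h)
    (u : ℕ → ι → K) {i : ℕ} (hT : T (i + 1) ≠ 0) :
    T i • consecutiveMatrix h u (i + 1) + t (i + 1) • anchorMatrix h u (i + 1)
      = (T (i + 1) / 2) • vecMulVec (u (i + 1)) (u (i + 1))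
        + t (i + 1) • symmOuter (u (i + 1)) (∑ k ∈ range (i + 1), t k • u k) := by
  have hmove := hstep.smul_stepDisplacement u hT
  rw [hstep.partialSum_succ] at hmove ⊢
  rw [consecutiveMatrix_eq_symmOuter, anchorMatrix_eq_symmOuter, ← symmOuter_self, ← map_smul,
    ← map_smul, ← map_smul, ← map_smul, ← map_add, ← map_add, sum_Icc_succ_top (by omega),
    Nat.add_sub_cancel]
  congr 1
  linear_combination (norm := module) hmove

theorem IsGFPGMStep.sum_consecutiveMatrix_add_sum_anchorMatrix (hstep : IsGFPGMStep t T h)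
    (hT : ∀ i, T i ≠ 0) (u : ℕ → ι → K) (n : ℕ) :
    ∑ i ∈ Icc 1 n, T (i - 1) • consecutiveMatrix h u i
        + ∑ i ∈ range (n + 1), t i • anchorMatrix h u i
      = (1 / 2 : K) • (∑ i ∈ range (n + 1), (T i - t i ^ 2) • vecMulVec (u i) (u i)
        + vecMulVec (∑ i ∈ range (n + 1), t i • u i) (∑ i ∈ range (n + 1), t i • u i)) := by
  induction n with
  | zero =>
    simp only [zero_add, Order.lt_one_iff, Icc_eq_empty_of_lt, sum_empty, range_one, sum_singleton,
      anchorMatrix, add_zero, hstep.partialSum_zero, vecMulVec_smul, smul_vecMulVec]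
    module
  | succ n ih =>
    have hrow := hstep.smul_consecutiveMatrix_add_smul_anchorMatrix u (hT (n + 1))
    rw [sum_Icc_succ_top (by omega), sum_range_succ, sum_range_succ _ (n + 1),
      sum_range_succ _ (n + 1), smul_add, half_smul_vecMulVec_add_self, map_smul,
      LinearMap.smul_apply, vecMulVec_smul, smul_vecMulVec, Nat.add_sub_cancel]
    linear_combination (norm := module) ih + hrow

end SymmOuter

section StandardBasis

variable {R : Type*} [Semiring R] {N : ℕ} {u : ℕ → Fin N → R}

lemma sum_range_smul_standardBasis (hu : ∀ i (j : Fin N), u i j = if (j : ℕ) = i then 1 else 0)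
    (c : ℕ → R) : ∑ i ∈ range N, c i • u i = fun j : Fin N => c j := by
  ext j
  simp [hu]

lemma sum_range_smul_vecMulVec_standardBasis
    (hu : ∀ i (j : Fin N), u i j = if (j : ℕ) = i then 1 else 0) (c : ℕ → R) :
    ∑ i ∈ range N, c i • vecMulVec (u i) (u i) = diagonal fun j : Fin N => c j := by
  ext a b
  rw [diagonal_apply]
  split_ifs with hab
  · simp [Matrix.sum_apply, vecMulVec_apply, hu, hab]
  · simp [Matrix.sum_apply, vecMulVec_apply, hu, Fin.val_inj, hab]

end StandardBasis

lemma IsGFPGMStep.dualMatrix_eq {K : Type*} [Field K] [NeZero (2 : K)] {t T : ℕ → K}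
    {h : ℕ → ℕ → K} (hstep : IsGFPGMStep t T h) (hT : ∀ i, T i ≠ 0) {N : ℕ} (hN : 0 < N)
    {u : ℕ → Fin N → K} (hu : ∀ i (j : Fin N), u i j = if (j : ℕ) = i then 1 else 0)
    {lam tau : ℕ → K} (hlam : ∀ i, 1 ≤ i → i ≤ N - 1 → lam i = T (i - 1) / T (N - 1))
    (htau : ∀ i, i ≤ N - 1 → tau i = t i / T (N - 1)) :
    dualMatrix lam tau h u N
      = (1 / (2 * T (N - 1))) • (diagonal (fun j : Fin N => T j - t j ^ 2)
        + vecMulVec (fun j : Fin N => t j) fun j : Fin N => t j) := by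
  have hA : ∀ i ∈ Icc 1 (N - 1), lam i • consecutiveMatrix h u i
      = (1 / T (N - 1)) • T (i - 1) • consecutiveMatrix h u i := fun i hi => by
    rw [hlam i (mem_Icc.mp hi).1 (mem_Icc.mp hi).2, smul_smul, one_div_mul_eq_div]
  have hD : ∀ i ∈ range N, tau i • anchorMatrix h u i
      = (1 / T (N - 1)) • t i • anchorMatrix h u i := fun i hi => by
    rw [htau i (Nat.le_sub_one_of_lt (mem_range.mp hi)), smul_smul, one_div_mul_eq_div]
  have hsum := hstep.sum_consecutiveMatrix_add_sum_anchorMatrix hT u (N - 1)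
  rw [Nat.sub_add_cancel hN, sum_range_smul_vecMulVec_standardBasis hu,
    sum_range_smul_standardBasis hu] at hsum
  rw [dualMatrix, sum_congr rfl hA, sum_congr rfl hD, ← smul_sum, ← smul_sum, ← smul_add, hsum,
    smul_smul, one_div_mul_one_div, mul_comm (T _)]

lemma diagonal_sub_sq_add_vecMulVec_sumElim_one {R m : Type*} [Ring R] [DecidableEq m]
    (x d : m → R) :
    diagonal (fun j => Sum.elim d (fun _ : Fin 1 => 1) j - Sum.elim x (fun _ => 1) j ^ 2)
        + vecMulVec (Sum.elim x fun _ => 1) (Sum.elim x fun _ => 1)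
      = fromBlocks (diagonal (fun j => d j - x j ^ 2) + vecMulVec x x)
          (of fun i _ => x i) (of fun _ j => x j) (of fun _ _ => 1) := by
  ext (a | a) (b | b) <;> simp [vecMulVec_apply, diagonal_apply]

theorem gfpgm_dual_feasible_point_general
    (N : ℕ) (hN : 2 ≤ N) (t T : ℕ → ℝ) (ht0 : 0 < t 0) (ht : ∀ i, 0 ≤ t i)
    (htT : ∀ i, t i ^ 2 ≤ T i) (h : ℕ → ℕ → ℝ) (hstep : IsGFPGMStep t T h)
    (u : ℕ → Fin N → ℝ) (hu : ∀ i (j : Fin N), u i j = if (j : ℕ) = i then 1 else 0)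
    (lam tau : ℕ → ℝ) (gam : ℝ)
    (hlam : ∀ i, 1 ≤ i → i ≤ N - 1 → lam i = T (i - 1) / T (N - 1))
    (htau : ∀ i, i ≤ N - 1 → tau i = t i / T (N - 1))
    (hgam : gam = 1 / T (N - 1))
    (S : Matrix (Fin N) (Fin N) ℝ)
    (hS : S = dualMatrix lam tau h u N)
    (M : Matrix (Fin N ⊕ Fin 1) (Fin N ⊕ Fin 1) ℝ)
    (hM : M = fromBlocks S (of fun i _ => tau (i : ℕ) / 2)
      (of fun _ j => tau (j : ℕ) / 2) (of fun _ _ => gam / 2))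
    (ttil Ttil : Fin N ⊕ Fin 1 → ℝ)
    (httil : ttil = Sum.elim (fun i : Fin N => t (i : ℕ)) fun _ => 1)
    (hTtil : Ttil = Sum.elim (fun i : Fin N => T (i : ℕ)) fun _ => 1) :
    ((∀ i, 1 ≤ i → i ≤ N - 1 → 0 ≤ lam i) ∧ (∀ i, i ≤ N - 1 → 0 ≤ tau i) ∧
      tau 0 = lam 1 ∧ lam (N - 1) + tau (N - 1) = 1 ∧
      ∀ i, 1 ≤ i → i ≤ N - 2 → lam i - lam (i + 1) + tau i = 0) ∧
    M = (1 / (2 * T (N - 1))) •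
        (diagonal (fun j => Ttil j - ttil j ^ 2) + vecMulVec ttil ttil) ∧
    M.PosSemidef := by
  have hTpos := hstep.partialSum_pos ht0 ht
  have htau_half : ∀ i : Fin N, tau i / 2 = 1 / (2 * T (N - 1)) * t i := fun i => by
    rw [htau i (Nat.le_sub_one_of_lt i.isLt)]
    ring
  have hgam_half : gam / 2 = 1 / (2 * T (N - 1)) * 1 := by
    rw [hgam]
    ring
  have hM_eq : M = (1 / (2 * T (N - 1))) •
      (diagonal (fun j => Ttil j - ttil j ^ 2) + vecMulVec ttil ttil) := by
    rw [hM, hTtil, httil, diagonal_sub_sq_add_vecMulVec_sumElim_one, fromBlocks_smul, hS,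
      hstep.dualMatrix_eq (fun i => (hTpos i).ne') (by omega) hu hlam htau]
    simp only [htau_half, hgam_half]
    rfl
  have hslack : 0 ≤ fun j => Ttil j - ttil j ^ 2 := by
    subst httil hTtil
    rintro (j | j)
    · exact sub_nonneg.mpr (htT j)
    · simp
  have hrank_one : (vecMulVec ttil ttil).PosSemidef := posSemidef_vecMulVec_self_star ttil
  exact ⟨hstep.multipliers_feasible ht0 ht hN hlam htau, hM_eq, hM_eq ▸
    ((PosSemidef.diagonal hslack).add hrank_one).smul
      (one_div_nonneg.mpr (mul_pos two_pos (hTpos _)).le)⟩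

/-- for the GFPGM step coefficients, the multipliers
λ_i = T_{i−1}/T_{N−1}, τ_i = t_i/T_{N−1}, γ = 1/T_{N−1} are dual-feasible, and the
(N+1)×(N+1) block matrix [[S, τ/2],[τᵀ/2, γ/2]] equals
(1/(2T_{N−1}))(diag(T̃ − t̃∘t̃) + t̃ t̃ᵀ), hence is positive semidefinite. -/
theorem gfpgm_dual_feasible_point
    (N : ℕ) (hN : 2 ≤ N)
    (t T : ℕ → ℝ) (ht0 : t 0 = 1) (htpos : ∀ i, 0 < t i)
    (hT : ∀ i, T i = ∑ l ∈ Finset.range (i + 1), t l)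
    (htT : ∀ i, t i ^ 2 ≤ T i)
    (h : ℕ → ℕ → ℝ)
    (hdiag : ∀ i, h (i + 1) i = 1 + (t i - 1) * t (i + 1) / T (i + 1))
    (hoff : ∀ i, ∀ k < i, h (i + 1) k
        = t (i + 1) / T (i + 1) * (t k - ∑ j ∈ Finset.Icc (k + 1) i, h j k))
    (u : ℕ → Fin N → ℝ) (hu : ∀ i (j : Fin N), u i j = if (j : ℕ) = i then 1 else 0)
    (A D : ℕ → Matrix (Fin N) (Fin N) ℝ)
    (hA : ∀ i, A i = (1 / 2 : ℝ) • Matrix.vecMulVec (u i) (u i)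
        - (1 / 2 : ℝ) • Matrix.vecMulVec (u (i - 1)) (u i)
        - (1 / 2 : ℝ) • Matrix.vecMulVec (u i) (u (i - 1))
        + ∑ k ∈ Finset.range i,
            ((1 / 2 : ℝ) * h i k) • (Matrix.vecMulVec (u i) (u k) + Matrix.vecMulVec (u k) (u i)))
    (hD : ∀ i, D i = (1 / 2 : ℝ) • Matrix.vecMulVec (u i) (u i)
        + ∑ j ∈ Finset.Icc 1 i, ∑ k ∈ Finset.range j,
            ((1 / 2 : ℝ) * h j k) • (Matrix.vecMulVec (u i) (u k) + Matrix.vecMulVec (u k) (u i)))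
    (lam tau : ℕ → ℝ) (gam : ℝ)
    (hlam : ∀ i, 1 ≤ i → i ≤ N - 1 → lam i = T (i - 1) / T (N - 1))
    (htau : ∀ i, i ≤ N - 1 → tau i = t i / T (N - 1))
    (hgam : gam = 1 / T (N - 1))
    (S : Matrix (Fin N) (Fin N) ℝ)
    (hS : S = ∑ i ∈ Finset.Icc 1 (N - 1), lam i • A i + ∑ i ∈ Finset.range N, tau i • D i)
    (M : Matrix (Fin N ⊕ Fin 1) (Fin N ⊕ Fin 1) ℝ)
    (hM : M = Matrix.fromBlocks S (Matrix.of fun i _ => tau (i : ℕ) / 2)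
        (Matrix.of fun _ j => tau (j : ℕ) / 2) (Matrix.of fun _ _ => gam / 2))
    (ttil Ttil : Fin N ⊕ Fin 1 → ℝ)
    (httil : ttil = Sum.elim (fun i : Fin N => t (i : ℕ)) fun _ => 1)
    (hTtil : Ttil = Sum.elim (fun i : Fin N => T (i : ℕ)) fun _ => 1) :
    ((∀ i, 1 ≤ i → i ≤ N - 1 → 0 ≤ lam i) ∧ (∀ i, i ≤ N - 1 → 0 ≤ tau i) ∧
      tau 0 = lam 1 ∧ lam (N - 1) + tau (N - 1) = 1 ∧
      ∀ i, 1 ≤ i → i ≤ N - 2 → lam i - lam (i + 1) + tau i = 0) ∧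
    M = (1 / (2 * T (N - 1))) •
        (Matrix.diagonal (fun j => Ttil j - ttil j ^ 2) + Matrix.vecMulVec ttil ttil) ∧
    M.PosSemidef := by
  obtain ⟨rfl, rfl⟩ : A = consecutiveMatrix h u ∧ D = anchorMatrix h u := ⟨funext hA, funext hD⟩
  exact gfpgm_dual_feasible_point_general N hN t T (htpos 0) (fun i => (htpos i).le) htT h
    ⟨hT, hdiag, hoff⟩ u hu lam tau gam hlam htau hgam S hS M hM ttil Ttil httil hTtil
end

section
/- With h, λ, τ, η, β, γ, S' as defined, the multipliers are dual-feasible: all of λ_i, τ_i, η, β_i are nonnegative, τ_0 = λ_1, λ_{N−1} + τ_{N−1} = η, Σ_{i=0}^{N} β_i = 1, and λ_i − λ_{i+1} + τ_i = 0 for 1 ≤ i ≤ N−2; and the (N+2)×(N+2) symmetric block matrix [[S', (τᵀ, 0)ᵀ/2], [(τᵀ, 0)/2, γ/2]] equals (τ_0/2)· t̃ t̃ᵀ, where t̃ := (t_0, …, t_{N−1}, 0, 1)ᵀ, and in particular it is positive semidefinite. -/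
/-!
Put `w i = ∑ l < i, t l • v l`, let `p i = ∑ k < i, h i k • v k` be the `i`-th step and
`q i = ∑ 1 ≤ j ≤ i, p j` the sum of the first `i` steps. Then `A_{i-1,i}` is half of
`v i (v i)ᵀ` plus the symmetrized outer product of `v i` with `p i - v (i - 1)`, and `D_i` is the
same expression with `q i` in place of `p i - v (i - 1)`. The recursion for `h` says exactly that
`T (i - 1) • (p i - v (i - 1)) + t i • q i = t i • w i`, so the terms of index `i` in `S' / τ₀` add
up to half of `t i² v i (v i)ᵀ + t i (v i (w i)ᵀ + w i (v i)ᵀ)`. This is half of the increment of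
`w wᵀ` when `w i` grows to `w (i + 1)`, and the sum over `i` telescopes.
-/

namespace GFPGM

open Finset Matrix

section Steps

/-- The sums `T i = t 0 + ⋯ + t i`; the last index is included. -/
def partialSum {M : Type*} [AddCommMonoid M] (t : ℕ → M) (i : ℕ) : M := ∑ l ∈ range (i + 1), t l

lemma partialSum_zero {M : Type*} [AddCommMonoid M] (t : ℕ → M) : partialSum t 0 = t 0 := by
  simp [partialSum]

lemma partialSum_succ {M : Type*} [AddCommMonoid M] (t : ℕ → M) (i : ℕ) :
    partialSum t (i + 1) = partialSum t i + t (i + 1) :=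
  sum_range_succ t (i + 1)

lemma partialSum_pos {M : Type*} [AddCommMonoid M] [PartialOrder M] [IsOrderedCancelAddMonoid M]
    {t : ℕ → M} (ht : ∀ i, 0 < t i) (i : ℕ) : 0 < partialSum t i :=
  sum_pos (fun l _ => ht l) nonempty_range_add_one

variable {R E : Type*} [Semiring R] [AddCommMonoid E] [Module R E]

/-- The vector `w i = ∑ l < i, t l • v l` whose outer square is the telescoping quantity. -/
def weightedSum (t : ℕ → R) (v : ℕ → E) (i : ℕ) : E := ∑ l ∈ range i, t l • v l

lemma weightedSum_succ (t : ℕ → R) (v : ℕ → E) (i : ℕ) :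
    weightedSum t v (i + 1) = weightedSum t v i + t i • v i :=
  sum_range_succ _ i

/-- The `i`-th step `∑ k < i, h i k • v k` of the first-order method with coefficients `h`, when
`v k` is its `k`-th gradient. -/
def step (h : ℕ → ℕ → R) (v : ℕ → E) (i : ℕ) : E := ∑ k ∈ range i, h i k • v k

/-- The sum of the steps `1, …, i` of the first-order method with coefficients `h`, when `v k` is
its `k`-th gradient. -/
def displacement (h : ℕ → ℕ → R) (v : ℕ → E) (i : ℕ) : E := ∑ j ∈ Icc 1 i, step h v j

lemma displacement_zero (h : ℕ → ℕ → R) (v : ℕ → E) : displacement h v 0 = 0 := by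
  simp [displacement]

lemma displacement_succ (h : ℕ → ℕ → R) (v : ℕ → E) (i : ℕ) :
    displacement h v (i + 1) = displacement h v i + step h v (i + 1) :=
  sum_Icc_succ_top (Nat.le_add_left 1 i) _

lemma displacement_eq_sum (h : ℕ → ℕ → R) (v : ℕ → E) (i : ℕ) :
    displacement h v i = ∑ k ∈ range i, (∑ j ∈ Icc (k + 1) i, h j k) • v k := by
  simp only [displacement, step, sum_smul]
  refine sum_comm' fun j k => ?_
  simp only [mem_Icc, mem_range]
  omega

end Steps

section RankOne

variable {R ι κ : Type*}

/-- The symmetrized outer product `x yᵀ + y xᵀ`. -/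
def symmOuter [CommSemiring R] : (ι → R) →ₗ[R] (ι → R) →ₗ[R] Matrix ι ι R :=
  vecMulVecBilin R R + (vecMulVecBilin R R).flip

lemma symmOuter_apply [CommSemiring R] (x y : ι → R) :
    symmOuter x y = vecMulVec x y + vecMulVec y x := rfl

lemma vecMulVec_add_smul_self [CommSemiring R] (w x : ι → R) (c : R) :
    vecMulVec (w + c • x) (w + c • x)
      = vecMulVec w w + c • symmOuter x w + c ^ 2 • vecMulVec x x := by
  simp only [symmOuter_apply, add_vecMulVec, vecMulVec_add, smul_vecMulVec, vecMulVec_smul]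
  module

lemma sum_mul_smul_vecMulVec_add [CommSemiring R] (a : R) (x : ι → R) (v : ℕ → ι → R)
    (h : ℕ → ℕ → R) (i : ℕ) :
    ∑ k ∈ range i, (a * h i k) • (vecMulVec x (v k) + vecMulVec (v k) x)
      = a • symmOuter x (step h v i) := by
  simp only [step, map_sum, map_smul, smul_sum, smul_smul, symmOuter_apply]

lemma smul_vecMulVec_sumElim_one [CommSemiring R] (c : R) (w : ι → R) :
    c • vecMulVec (Sum.elim w fun _ : κ => 1) (Sum.elim w fun _ : κ => 1)
      = fromBlocks (c • vecMulVec w w) (of fun i _ => c * w i) (of fun _ j => c * w j)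
        (of fun _ _ => c) := by
  ext (i | i) (j | j) <;> simp [vecMulVec_apply]

lemma weightedSum_indicator [Semiring R] {m : ℕ} (t : ℕ → R) {v : ℕ → Fin m → R}
    (hv : ∀ i (j : Fin m), v i j = if (j : ℕ) = i then 1 else 0) (n : ℕ) :
    weightedSum t v n = fun j : Fin m => if (j : ℕ) < n then t j else 0 := by
  ext j
  simp only [weightedSum, Finset.sum_apply, Pi.smul_apply, smul_eq_mul, hv, mul_ite, mul_one,
    mul_zero, sum_ite_eq, mem_range]

end RankOne

section StepCoeff

variable {K E : Type*} [Field K] [AddCommGroup E] [Module K E] {t : ℕ → K} {h : ℕ → ℕ → K}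

/-- `h` satisfies the recursion defining the step coefficients of GFPGM with parameters `t`. -/
structure IsStepCoeff (t : ℕ → K) (h : ℕ → ℕ → K) : Prop where
  diag : ∀ i, h (i + 1) i = 1 + (t i - 1) * t (i + 1) / partialSum t (i + 1)
  offDiag : ∀ i, ∀ k < i, h (i + 1) k
    = t (i + 1) / partialSum t (i + 1) * (t k - ∑ j ∈ Icc (k + 1) i, h j k)

lemma IsStepCoeff.partialSum_mul_diag (hh : IsStepCoeff t h) {i : ℕ}
    (hT : partialSum t (i + 1) ≠ 0) :
    partialSum t (i + 1) * h (i + 1) i = partialSum t i + t (i + 1) * t i := by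
  rw [hh.diag, mul_add, mul_div_cancel₀ _ hT, partialSum_succ]
  ring

lemma IsStepCoeff.partialSum_mul_offDiag (hh : IsStepCoeff t h) {i k : ℕ} (hk : k < i)
    (hT : partialSum t (i + 1) ≠ 0) :
    partialSum t (i + 1) * h (i + 1) k = t (i + 1) * (t k - ∑ j ∈ Icc (k + 1) i, h j k) := by
  rw [hh.offDiag i k hk, ← mul_assoc, mul_div_cancel₀ _ hT]

lemma IsStepCoeff.partialSum_smul_step (hh : IsStepCoeff t h) (v : ℕ → E) {i : ℕ}
    (hT : partialSum t (i + 1) ≠ 0) :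
    partialSum t (i + 1) • step h v (i + 1)
      = partialSum t i • v i + t (i + 1) • (weightedSum t v (i + 1) - displacement h v i) := by
  have hlower : partialSum t (i + 1) • ∑ k ∈ range i, h (i + 1) k • v k
      = t (i + 1) • (weightedSum t v i - displacement h v i) := by
    rw [displacement_eq_sum, weightedSum, ← sum_sub_distrib, smul_sum, smul_sum]
    refine sum_congr rfl fun k hk => ?_
    rw [smul_smul, hh.partialSum_mul_offDiag (mem_range.mp hk) hT, mul_smul, sub_smul]
  rw [step, sum_range_succ, smul_add, hlower, smul_smul, hh.partialSum_mul_diag hT,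
    weightedSum_succ]
  module

lemma IsStepCoeff.smul_step_sub_add_smul_displacement (hh : IsStepCoeff t h) (v : ℕ → E) {i : ℕ}
    (hT : partialSum t (i + 1) ≠ 0) :
    partialSum t i • (step h v (i + 1) - v i) + t (i + 1) • displacement h v (i + 1)
      = t (i + 1) • weightedSum t v (i + 1) := by
  have hstep := hh.partialSum_smul_step v hT
  rw [partialSum_succ] at hstep
  rw [displacement_succ]
  linear_combination (norm := module) hstep

end StepCoeff

section Matrices

variable {K ι : Type*} [Field K] {t : ℕ → K} {h : ℕ → ℕ → K}

/-- The matrix `A_{i-1,i}` of the interpolation inequality between the iterates `i - 1` and `i`,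
for gradients `v`. It is meaningful for `1 ≤ i` only. -/
def consecutiveMatrix (h : ℕ → ℕ → K) (v : ℕ → ι → K) (i : ℕ) : Matrix ι ι K :=
  (1 / 2 : K) • vecMulVec (v i) (v i) - (1 / 2 : K) • vecMulVec (v (i - 1)) (v i)
    - (1 / 2 : K) • vecMulVec (v i) (v (i - 1))
    + ∑ k ∈ range i, ((1 / 2 : K) * h i k) • (vecMulVec (v i) (v k) + vecMulVec (v k) (v i))

/-- The matrix `D_i` of the interpolation inequality between the minimizer and the iterate `i`,
for gradients `v`. -/
def minimizerMatrix (h : ℕ → ℕ → K) (v : ℕ → ι → K) (i : ℕ) : Matrix ι ι K :=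
  (1 / 2 : K) • vecMulVec (v i) (v i) + ∑ j ∈ Icc 1 i, ∑ k ∈ range j,
    ((1 / 2 : K) * h j k) • (vecMulVec (v i) (v k) + vecMulVec (v k) (v i))

lemma consecutiveMatrix_succ (h : ℕ → ℕ → K) (v : ℕ → ι → K) (i : ℕ) :
    consecutiveMatrix h v (i + 1) = (1 / 2 : K) • (vecMulVec (v (i + 1)) (v (i + 1))
      + symmOuter (v (i + 1)) (step h v (i + 1) - v i)) := by
  rw [consecutiveMatrix, sum_mul_smul_vecMulVec_add, map_sub, symmOuter_apply _ (v i),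
    Nat.add_sub_cancel]
  module

lemma minimizerMatrix_eq (h : ℕ → ℕ → K) (v : ℕ → ι → K) (i : ℕ) :
    minimizerMatrix h v i
      = (1 / 2 : K) • (vecMulVec (v i) (v i) + symmOuter (v i) (displacement h v i)) := by
  simp only [minimizerMatrix, sum_mul_smul_vecMulVec_add, ← smul_sum, ← map_sum, ← smul_add,
    displacement]

lemma IsStepCoeff.smul_consecutive_add_smul_minimizer_sub (hh : IsStepCoeff t h)
    (v : ℕ → ι → K) {i : ℕ} (hT : partialSum t (i + 1) ≠ 0) :
    partialSum t i • consecutiveMatrix h v (i + 1) + t (i + 1) • minimizerMatrix h v (i + 1)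
        - (1 / 2 * (partialSum t (i + 1) - t (i + 1) ^ 2)) • vecMulVec (v (i + 1)) (v (i + 1))
      = (1 / 2 : K) • (vecMulVec (weightedSum t v (i + 2)) (weightedSum t v (i + 2))
        - vecMulVec (weightedSum t v (i + 1)) (weightedSum t v (i + 1))) := by
  have hcross := congrArg (symmOuter (v (i + 1))) (hh.smul_step_sub_add_smul_displacement v hT)
  simp only [map_add, map_smul] at hcross
  rw [consecutiveMatrix_succ, minimizerMatrix_eq, weightedSum_succ t v (i + 1),
    vecMulVec_add_smul_self, partialSum_succ]
  linear_combination (norm := module) (1 / 2 : K) • hcross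

theorem IsStepCoeff.sum_consecutive_add_sum_minimizer_sub (hh : IsStepCoeff t h) (v : ℕ → ι → K)
    (hT : ∀ i, partialSum t i ≠ 0) (n : ℕ) :
    ∑ i ∈ Icc 1 n, partialSum t (i - 1) • consecutiveMatrix h v i
        + ∑ i ∈ range (n + 1), t i • minimizerMatrix h v i
        - ∑ i ∈ range (n + 1), (1 / 2 * (partialSum t i - t i ^ 2)) • vecMulVec (v i) (v i)
      = (1 / 2 : K) • vecMulVec (weightedSum t v (n + 1)) (weightedSum t v (n + 1)) := by
  induction n with
  | zero =>
    simp only [Icc_eq_empty_of_lt Nat.zero_lt_one, sum_empty, zero_add, sum_range_one, weightedSum,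
      minimizerMatrix_eq, displacement_zero, partialSum_zero, map_zero, smul_vecMulVec,
      vecMulVec_smul]
    module
  | succ n ih =>
    rw [sum_Icc_succ_top (by omega), sum_range_succ _ (n + 1), sum_range_succ _ (n + 1),
      Nat.add_sub_cancel]
    linear_combination (norm := module)
      ih + hh.smul_consecutive_add_smul_minimizer_sub v (hT (n + 1))

/-- The matrix `S'` of the dual problem with multipliers `lam`, `tau`, `beta`, `eta` and horizon
`N = n + 1`. -/
def dualMatrix (n : ℕ) (h : ℕ → ℕ → K) (v : ℕ → ι → K) (lam tau beta : ℕ → K) (eta : K) :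
    Matrix ι ι K :=
  ∑ i ∈ Icc 1 n, lam i • consecutiveMatrix h v i
    + ∑ i ∈ range (n + 1), tau i • minimizerMatrix h v i
    + (eta / 2) • vecMulVec (v (n + 1)) (v (n + 1))
    - ∑ i ∈ range (n + 2), beta i • vecMulVec (v i) (v i)

end Matrices

section Multipliers

variable {K ι : Type*} [Field K] {n : ℕ} {t : ℕ → K} {c : K} {lam tau beta : ℕ → K} {eta : K}

/-- The multipliers `λ`, `τ`, `β`, `η` of the dual point with horizon `N = n + 1`, parameters `t`
and an arbitrary common factor `c` in place of `τ₀`. -/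
structure IsMultipliers (n : ℕ) (t : ℕ → K) (c : K) (lam tau beta : ℕ → K) (eta : K) : Prop where
  lam_eq : ∀ i, 1 ≤ i → i ≤ n → lam i = partialSum t (i - 1) * c
  tau_eq : ∀ i, i ≤ n → tau i = t i * c
  beta_eq : ∀ i, i ≤ n → beta i = 1 / 2 * (partialSum t i - t i ^ 2) * c
  beta_last : beta (n + 1) = 1 / 2 * partialSum t n * c
  eta_eq : eta = partialSum t n * c

namespace IsMultipliers

theorem dualMatrix_eq (hm : IsMultipliers n t c lam tau beta eta) {h : ℕ → ℕ → K}
    (hh : IsStepCoeff t h) (hT : ∀ i, partialSum t i ≠ 0) (v : ℕ → ι → K) :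
    dualMatrix n h v lam tau beta eta
      = (c / 2) • vecMulVec (weightedSum t v (n + 1)) (weightedSum t v (n + 1)) := by
  have hlam : ∑ i ∈ Icc 1 n, lam i • consecutiveMatrix h v i
      = c • ∑ i ∈ Icc 1 n, partialSum t (i - 1) • consecutiveMatrix h v i := by
    rw [smul_sum]
    refine sum_congr rfl fun i hi => ?_
    rw [hm.lam_eq i (mem_Icc.mp hi).1 (mem_Icc.mp hi).2, mul_comm, mul_smul]
  have htau : ∑ i ∈ range (n + 1), tau i • minimizerMatrix h v i
      = c • ∑ i ∈ range (n + 1), t i • minimizerMatrix h v i := by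
    rw [smul_sum]
    refine sum_congr rfl fun i hi => ?_
    rw [hm.tau_eq i (mem_range_succ_iff.mp hi), mul_comm, mul_smul]
  have hbeta : ∑ i ∈ range (n + 1), beta i • vecMulVec (v i) (v i)
      = c • ∑ i ∈ range (n + 1),
        (1 / 2 * (partialSum t i - t i ^ 2)) • vecMulVec (v i) (v i) := by
    rw [smul_sum]
    refine sum_congr rfl fun i hi => ?_
    rw [hm.beta_eq i (mem_range_succ_iff.mp hi), mul_comm, mul_smul]
  rw [dualMatrix, sum_range_succ _ (n + 1), hlam, htau, hbeta, hm.beta_last, hm.eta_eq]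
  linear_combination (norm := module) c • hh.sum_consecutive_add_sum_minimizer_sub v hT n

theorem fromBlocks_dualMatrix_eq {κ : Type*} {m : ℕ} (hm : IsMultipliers n t c lam tau beta eta)
    {h : ℕ → ℕ → K} (hh : IsStepCoeff t h) (hT : ∀ i, partialSum t i ≠ 0) {v : ℕ → Fin m → K}
    (hv : ∀ i (j : Fin m), v i j = if (j : ℕ) = i then 1 else 0) :
    fromBlocks (dualMatrix n h v lam tau beta eta)
        (of fun i (_ : κ) => (if (i : ℕ) < n + 1 then tau (i : ℕ) else 0) / 2)
        (of fun (_ : κ) j => (if (j : ℕ) < n + 1 then tau (j : ℕ) else 0) / 2)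
        (of fun _ _ => c / 2)
      = (c / 2) • vecMulVec
          (Sum.elim (fun i : Fin m => if (i : ℕ) < n + 1 then t i else 0) fun _ : κ => 1)
          (Sum.elim (fun i : Fin m => if (i : ℕ) < n + 1 then t i else 0) fun _ : κ => 1) := by
  have htau (i : ℕ) : (if i < n + 1 then tau i else 0) / 2
      = c / 2 * if i < n + 1 then t i else 0 := by
    split_ifs with hi
    · rw [hm.tau_eq i (Nat.le_of_lt_succ hi)]
      ring
    · simp
  rw [smul_vecMulVec_sumElim_one, hm.dualMatrix_eq hh hT, weightedSum_indicator t hv]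
  simp only [htau]

lemma lam_one (hm : IsMultipliers n t c lam tau beta eta) (hn : 1 ≤ n) : lam 1 = t 0 * c := by
  rw [hm.lam_eq 1 le_rfl hn, Nat.sub_self, partialSum_zero]

lemma lam_add_tau (hm : IsMultipliers n t c lam tau beta eta) {i : ℕ} (hi : 1 ≤ i) (hin : i ≤ n) :
    lam i + tau i = partialSum t i * c := by
  obtain ⟨m, rfl⟩ := Nat.exists_eq_add_of_le' hi
  rw [hm.lam_eq _ hi hin, hm.tau_eq _ hin, Nat.add_sub_cancel, partialSum_succ, add_mul]

lemma lam_last_add_tau_last (hm : IsMultipliers n t c lam tau beta eta) (hn : 1 ≤ n) :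
    lam n + tau n = eta := by
  rw [hm.lam_add_tau hn le_rfl, hm.eta_eq]

lemma lam_sub_lam_succ_add_tau (hm : IsMultipliers n t c lam tau beta eta) {i : ℕ} (hi : 1 ≤ i)
    (hin : i < n) : lam i - lam (i + 1) + tau i = 0 := by
  rw [sub_add_eq_add_sub, hm.lam_add_tau hi hin.le, hm.lam_eq (i + 1) (Nat.le_add_left 1 i) hin,
    Nat.add_sub_cancel, sub_self]

lemma sum_beta (hm : IsMultipliers n t c lam tau beta eta) :
    ∑ i ∈ range (n + 2), beta i
      = 1 / 2 * (∑ k ∈ range (n + 1), (partialSum t k - t k ^ 2) + partialSum t n) * c := by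
  rw [sum_range_succ, sum_congr rfl fun i hi => hm.beta_eq i (mem_range_succ_iff.mp hi),
    ← sum_mul, ← mul_sum, hm.beta_last]
  ring

variable [LinearOrder K] [IsStrictOrderedRing K]

lemma lam_nonneg (hm : IsMultipliers n t c lam tau beta eta) {i : ℕ}
    (hT : 0 ≤ partialSum t (i - 1)) (hc : 0 ≤ c) (hi : 1 ≤ i) (hin : i ≤ n) : 0 ≤ lam i :=
  hm.lam_eq i hi hin ▸ mul_nonneg hT hc

lemma tau_nonneg (hm : IsMultipliers n t c lam tau beta eta) {i : ℕ} (ht : 0 ≤ t i) (hc : 0 ≤ c)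
    (hin : i ≤ n) : 0 ≤ tau i :=
  hm.tau_eq i hin ▸ mul_nonneg ht hc

lemma eta_nonneg (hm : IsMultipliers n t c lam tau beta eta) (hT : 0 ≤ partialSum t n)
    (hc : 0 ≤ c) : 0 ≤ eta :=
  hm.eta_eq ▸ mul_nonneg hT hc

lemma beta_nonneg (hm : IsMultipliers n t c lam tau beta eta) (hT : 0 ≤ partialSum t n)
    (htT : ∀ i, t i ^ 2 ≤ partialSum t i) (hc : 0 ≤ c) {i : ℕ} (hi : i ≤ n + 1) :
    0 ≤ beta i := by
  rcases hi.lt_or_eq with hlt | rfl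
  · rw [hm.beta_eq i (Nat.le_of_lt_succ hlt)]
    exact mul_nonneg (mul_nonneg (by norm_num) (sub_nonneg.mpr (htT i))) hc
  · rw [hm.beta_last]
    exact mul_nonneg (mul_nonneg (by norm_num) hT) hc

end IsMultipliers

lemma sum_partialSum_sub_sq_add_pos [LinearOrder K] [IsStrictOrderedRing K]
    (htT : ∀ i, t i ^ 2 ≤ partialSum t i) (hT : 0 < partialSum t n) :
    0 < 1 / 2 * (∑ k ∈ range (n + 1), (partialSum t k - t k ^ 2) + partialSum t n) :=
  mul_pos one_half_pos <|
    add_pos_of_nonneg_of_pos (sum_nonneg fun k _ => sub_nonneg.mpr (htT k)) hT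

end Multipliers

end GFPGM

/-- for the GFPGM step coefficients, the multipliers
τ_0 = ((1/2)(Σ_{k=0}^{N−1}(T_k − t_k²) + T_{N−1}))⁻¹, λ_i = T_{i−1}τ_0, τ_i = t_iτ_0,
η = T_{N−1}τ_0, β_i = (1/2)(T_i − t_i²)τ_0, β_N = (1/2)T_{N−1}τ_0, γ = τ_0 are
dual-feasible for the composite-gradient-mapping PEP, and the (N+2)×(N+2) block
matrix [[S', (τᵀ,0)ᵀ/2],[(τᵀ,0)/2, γ/2]] equals (τ_0/2)·t̃ t̃ᵀ with
t̃ = (t_0,…,t_{N−1},0,1)ᵀ, hence is positive semidefinite. -/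
theorem gfpgm_cgm_dual_feasible_point
    (N : ℕ) (hN : 2 ≤ N)
    (t T : ℕ → ℝ) (ht0 : t 0 = 1) (htpos : ∀ i, 0 < t i)
    (hT : ∀ i, T i = ∑ l ∈ Finset.range (i + 1), t l)
    (htT : ∀ i, t i ^ 2 ≤ T i)
    (h : ℕ → ℕ → ℝ)
    (hdiag : ∀ i, h (i + 1) i = 1 + (t i - 1) * t (i + 1) / T (i + 1))
    (hoff : ∀ i, ∀ k < i, h (i + 1) k
        = t (i + 1) / T (i + 1) * (t k - ∑ j ∈ Finset.Icc (k + 1) i, h j k))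
    (v : ℕ → Fin (N + 1) → ℝ) (hv : ∀ i (j : Fin (N + 1)), v i j = if (j : ℕ) = i then 1 else 0)
    (Abar Dbar : ℕ → Matrix (Fin (N + 1)) (Fin (N + 1)) ℝ)
    (hAbar : ∀ i, Abar i = (1 / 2 : ℝ) • Matrix.vecMulVec (v i) (v i)
        - (1 / 2 : ℝ) • Matrix.vecMulVec (v (i - 1)) (v i)
        - (1 / 2 : ℝ) • Matrix.vecMulVec (v i) (v (i - 1))
        + ∑ k ∈ Finset.range i,
            ((1 / 2 : ℝ) * h i k) • (Matrix.vecMulVec (v i) (v k) + Matrix.vecMulVec (v k) (v i)))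
    (hDbar : ∀ i, Dbar i = (1 / 2 : ℝ) • Matrix.vecMulVec (v i) (v i)
        + ∑ j ∈ Finset.Icc 1 i, ∑ k ∈ Finset.range j,
            ((1 / 2 : ℝ) * h j k) • (Matrix.vecMulVec (v i) (v k) + Matrix.vecMulVec (v k) (v i)))
    (lam tau beta : ℕ → ℝ) (eta gam : ℝ)
    (htau0 : tau 0 = (1 / 2 * (∑ k ∈ Finset.range N, (T k - t k ^ 2) + T (N - 1)))⁻¹)
    (htau : ∀ i, 1 ≤ i → i ≤ N - 1 → tau i = t i * tau 0)
    (hlam : ∀ i, 1 ≤ i → i ≤ N - 1 → lam i = T (i - 1) * tau 0)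
    (heta : eta = T (N - 1) * tau 0)
    (hbeta : ∀ i, i ≤ N - 1 → beta i = 1 / 2 * (T i - t i ^ 2) * tau 0)
    (hbetaN : beta N = 1 / 2 * T (N - 1) * tau 0)
    (hgam : gam = tau 0)
    (S' : Matrix (Fin (N + 1)) (Fin (N + 1)) ℝ)
    (hS' : S' = ∑ i ∈ Finset.Icc 1 (N - 1), lam i • Abar i
        + ∑ i ∈ Finset.range N, tau i • Dbar i
        + (eta / 2) • Matrix.vecMulVec (v N) (v N)
        - ∑ i ∈ Finset.range (N + 1), beta i • Matrix.vecMulVec (v i) (v i))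
    (M : Matrix (Fin (N + 1) ⊕ Fin 1) (Fin (N + 1) ⊕ Fin 1) ℝ)
    (hM : M = Matrix.fromBlocks S'
        (Matrix.of fun i _ => (if (i : ℕ) < N then tau (i : ℕ) else 0) / 2)
        (Matrix.of fun _ j => (if (j : ℕ) < N then tau (j : ℕ) else 0) / 2)
        (Matrix.of fun _ _ => gam / 2))
    (ttil : Fin (N + 1) ⊕ Fin 1 → ℝ)
    (httil : ttil = Sum.elim (fun i : Fin (N + 1) => if (i : ℕ) < N then t (i : ℕ) else 0)
        fun _ => 1) :
    ((∀ i, 1 ≤ i → i ≤ N - 1 → 0 ≤ lam i) ∧ (∀ i, i ≤ N - 1 → 0 ≤ tau i) ∧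
      0 ≤ eta ∧ (∀ i, i ≤ N → 0 ≤ beta i) ∧
      tau 0 = lam 1 ∧ lam (N - 1) + tau (N - 1) = eta ∧
      (∑ i ∈ Finset.range (N + 1), beta i) = 1 ∧
      ∀ i, 1 ≤ i → i ≤ N - 2 → lam i - lam (i + 1) + tau i = 0) ∧
    M = (tau 0 / 2) • Matrix.vecMulVec ttil ttil ∧
    M.PosSemidef := by
  obtain ⟨n, rfl⟩ : ∃ n, N = n + 1 := ⟨N - 1, by omega⟩
  have hn : 1 ≤ n := Nat.le_of_succ_le_succ hN
  obtain rfl : T = GFPGM.partialSum t := funext hT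
  obtain rfl : Abar = GFPGM.consecutiveMatrix h v := funext hAbar
  obtain rfl : Dbar = GFPGM.minimizerMatrix h v := funext hDbar
  have hTpos := GFPGM.partialSum_pos htpos
  have hnorm := GFPGM.sum_partialSum_sub_sq_add_pos htT (hTpos n)
  have hc : 0 < tau 0 := htau0 ▸ inv_pos.mpr hnorm
  have htau' : ∀ i, i ≤ n → tau i = t i * tau 0
    | 0, _ => by rw [ht0, one_mul]
    | i + 1, hi => htau (i + 1) (Nat.le_add_left 1 i) hi
  have hm : GFPGM.IsMultipliers n t (tau 0) lam tau beta eta := ⟨hlam, htau', hbeta, hbetaN, heta⟩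
  have hM' : M = (tau 0 / 2) • Matrix.vecMulVec ttil ttil := by
    rw [hM, httil, hS', hgam]
    exact hm.fromBlocks_dualMatrix_eq ⟨hdiag, hoff⟩ (fun i => (hTpos i).ne') hv
  exact ⟨⟨fun _ => hm.lam_nonneg (hTpos _).le hc.le,
    fun i => hm.tau_nonneg (htpos i).le hc.le, hm.eta_nonneg (hTpos n).le hc.le,
    fun _ => hm.beta_nonneg (hTpos n).le htT hc.le,
    by rw [hm.lam_one hn, ht0, one_mul], hm.lam_last_add_tau_last hn,
    by rw [hm.sum_beta, htau0]; exact mul_inv_cancel₀ hnorm.ne',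
    fun _ hi hin => hm.lam_sub_lam_succ_add_tau hi (by omega)⟩, hM',
    hM' ▸ (Matrix.posSemidef_vecMulVec_self_star ttil).smul (half_pos hc).le⟩
end

section
/- The step coefficients h defined by the GFPGM formula satisfy the equivalent recursion: for every i ≥ 1, h_{i+1,k} = ((T_i − t_i)t_{i+1}/(t_i T_{i+1})) · h_{i,k} for 0 ≤ k ≤ i−2, and h_{i+1,i−1} = ((T_i − t_i)t_{i+1}/(t_i T_{i+1})) · (h_{i,i−1} − 1). -/
/-!
Put `s i = t i / T i` and let `r i k = t k - ∑ j ∈ Icc (k + 1) i, h j k` be what remains of `t k`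
after row `i`. Below the diagonal, row `i + 1` takes the fraction `s (i + 1)` of `r i k` and leaves
the fraction `1 - s (i + 1)` for the later rows. Hence `h (i + 1) k = s (i + 1) * r i k` and
`h (i + 2) k = s (i + 2) * (1 - s (i + 1)) * r i k`, and the recursion compares the two. The
diagonal entry `h (i + 1) i` does the same to `t i - 1` once its summand `1` is set aside.
-/

/-- The remainder of `t k` after the entries of column `k` in rows `k + 1, …, i` are subtracted.
For `i ≤ k` no row is subtracted and the remainder is `t k`. -/
def columnRemainder {R : Type*} [AddCommGroup R] (t : ℕ → R) (h : ℕ → ℕ → R) (i k : ℕ) : R :=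
  t k - ∑ j ∈ Finset.Icc (k + 1) i, h j k

section AddCommGroup

variable {R : Type*} [AddCommGroup R] (t : ℕ → R) (h : ℕ → ℕ → R)

theorem columnRemainder_self (i : ℕ) : columnRemainder t h i i = t i := by
  simp [columnRemainder]

theorem columnRemainder_succ {i k : ℕ} (hk : k ≤ i) :
    columnRemainder t h (i + 1) k = columnRemainder t h i k - h (i + 1) k := by
  rw [columnRemainder, Finset.sum_Icc_succ_top (Nat.succ_le_succ hk), ← sub_sub, ← columnRemainder]

end AddCommGroup

/-- `h` is the array of step coefficients of the generalized fast proximal gradient method with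
parameters `t`. The sequence `s` stands for the ratios `t i / T i`, so that no division
is needed. Only the entries `h (i + 1) k` with `k ≤ i` are constrained. -/
structure IsGFPGMStepCoeff {R : Type*} [CommRing R] (t s : ℕ → R) (h : ℕ → ℕ → R) : Prop where
  diag : ∀ i, h (i + 1) i = 1 + (t i - 1) * s (i + 1)
  offDiag : ∀ i, ∀ k < i, h (i + 1) k = s (i + 1) * columnRemainder t h i k

namespace IsGFPGMStepCoeff

variable {R : Type*} [CommRing R] {t s : ℕ → R} {h : ℕ → ℕ → R} {i k : ℕ}

theorem columnRemainder_succ_of_lt (hh : IsGFPGMStepCoeff t s h) (hk : k < i) :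
    columnRemainder t h (i + 1) k = (1 - s (i + 1)) * columnRemainder t h i k := by
  rw [columnRemainder_succ t h hk.le, hh.offDiag i k hk, one_sub_mul]

theorem columnRemainder_succ_self (hh : IsGFPGMStepCoeff t s h) (i : ℕ) :
    columnRemainder t h (i + 1) i = (1 - s (i + 1)) * (t i - 1) := by
  rw [columnRemainder_succ t h le_rfl, columnRemainder_self, hh.diag]
  ring

theorem mul_succ_succ_of_lt (hh : IsGFPGMStepCoeff t s h) (hk : k < i) :
    s (i + 1) * h (i + 2) k = s (i + 2) * (1 - s (i + 1)) * h (i + 1) k := by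
  rw [hh.offDiag (i + 1) k (by lia), hh.columnRemainder_succ_of_lt hk, hh.offDiag i k hk]
  ring

theorem mul_succ_succ_self (hh : IsGFPGMStepCoeff t s h) (i : ℕ) :
    s (i + 1) * h (i + 2) i = s (i + 2) * (1 - s (i + 1)) * (h (i + 1) i - 1) := by
  rw [hh.offDiag (i + 1) i i.lt_succ_self, hh.columnRemainder_succ_self, hh.diag]
  ring

end IsGFPGMStepCoeff

theorem eq_sub_mul_div_mul_of_div_mul_eq {K : Type*} [Field K] {a b c d x y : K}
    (ha : a ≠ 0) (hb : b ≠ 0) (hxy : a / b * x = c / d * (1 - a / b) * y) :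
    x = (b - a) * c / (a * d) * y := by
  apply mul_left_cancel₀ (div_ne_zero ha hb)
  rw [hxy]
  field_simp

theorem gfpgm_step_coefficients_recursion_general {K : Type*} [Field K]
    (t T : ℕ → K) (ht : ∀ i, t i ≠ 0) (hsum : ∀ i, ∑ l ∈ Finset.range (i + 1), t l ≠ 0)
    (hT : ∀ i, T i = ∑ l ∈ Finset.range (i + 1), t l)
    (h : ℕ → ℕ → K)
    (hdiag : ∀ i, h (i + 1) i = 1 + (t i - 1) * t (i + 1) / T (i + 1))
    (hoff : ∀ i, ∀ k < i, h (i + 1) k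
        = t (i + 1) / T (i + 1) * (t k - ∑ j ∈ Finset.Icc (k + 1) i, h j k)) :
    ∀ i, 1 ≤ i →
      (∀ k, k + 2 ≤ i →
        h (i + 1) k = (T i - t i) * t (i + 1) / (t i * T (i + 1)) * h i k) ∧
      h (i + 1) (i - 1) = (T i - t i) * t (i + 1) / (t i * T (i + 1)) * (h i (i - 1) - 1) := by
  have hT_ne (i : ℕ) : T i ≠ 0 := hT i ▸ hsum i
  have hh : IsGFPGMStepCoeff t (fun i ↦ t i / T i) h :=
    ⟨fun i ↦ by rw [hdiag, mul_div_assoc], hoff⟩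
  intro i hi
  obtain ⟨n, rfl⟩ := Nat.exists_eq_add_of_le' hi
  refine ⟨fun k hk ↦ ?_, ?_⟩
  · have hkn : k < n := by lia
    exact eq_sub_mul_div_mul_of_div_mul_eq (ht _) (hT_ne _) (hh.mul_succ_succ_of_lt hkn)
  · exact eq_sub_mul_div_mul_of_div_mul_eq (ht _) (hT_ne _) (hh.mul_succ_succ_self n)

/-- the GFPGM step coefficients satisfy the equivalent recursion
h_{i+1,k} = ((T_i − t_i)t_{i+1}/(t_i T_{i+1}))·h_{i,k} for 0 ≤ k ≤ i−2 and
h_{i+1,i−1} = ((T_i − t_i)t_{i+1}/(t_i T_{i+1}))·(h_{i,i−1} − 1), for every i ≥ 1. -/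
theorem gfpgm_step_coefficients_recursion
    (t T : ℕ → ℝ) (ht0 : t 0 = 1) (htpos : ∀ i, 0 < t i)
    (hT : ∀ i, T i = ∑ l ∈ Finset.range (i + 1), t l)
    (h : ℕ → ℕ → ℝ)
    (hdiag : ∀ i, h (i + 1) i = 1 + (t i - 1) * t (i + 1) / T (i + 1))
    (hoff : ∀ i, ∀ k < i, h (i + 1) k
        = t (i + 1) / T (i + 1) * (t k - ∑ j ∈ Finset.Icc (k + 1) i, h j k)) :
    ∀ i, 1 ≤ i →
      (∀ k, k + 2 ≤ i →
        h (i + 1) k = (T i - t i) * t (i + 1) / (t i * T (i + 1)) * h i k) ∧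
      h (i + 1) (i - 1) = (T i - t i) * t (i + 1) / (t i * T (i + 1)) * (h i (i - 1) - 1) :=
  gfpgm_step_coefficients_recursion_general t T (fun i ↦ (htpos i).ne')
    (fun _ ↦ (Finset.sum_pos (fun l _ ↦ htpos l) Finset.nonempty_range_add_one).ne') hT h hdiag hoff
end

section
/- Let t be the FISTA parameter sequence, t_0 = 1 and t_{i+1} = (1 + √(1 + 4t_i²))/2, and let the FPGM (FISTA) iterates be y_0 = x_0 and, for i ≥ 0, x_{i+1} = p(y_i) and y_{i+1} = x_{i+1} + ((t_i − 1)/t_{i+1})(x_{i+1} − x_i). Then for every N ≥ 1, F(x_N) − F(x_*) ≤ L R² / (2 t_{N−1}²) ≤ 2 L R² / (N + 1)². -/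
open scoped RealInnerProductSpace

/-!
Strong convexity of the proximal model, the descent lemma and convexity of `f` together give
`F q + L/2 ‖z - q‖² ≤ F z + L/2 ‖z - y‖²` for a proximal gradient step from `y` to `q` and every
feasible `z`. For the step from `y_{i+1}`, take `z = (1 - 1/τ) x_{i+1} + (1/τ) x_*` with
`τ = t_{i+1}` and multiply by `τ²`: the relation `t_{i+1}² - t_{i+1} = t_i²` and the momentum
coefficient make both sides telescope, so that the energy
`t_i² (F x_{i+1} - F x_*) + L/2 ‖t_i x_{i+1} - (t_i - 1) x_i - x_*‖²` is nonincreasing.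
Linear growth of `t` turns the energy bound into the `1/N²` rate.
-/

open Set

section NormedSpace

variable {E : Type*} [NormedAddCommGroup E] [NormedSpace ℝ E] {s : Set E} {y z : E}

lemma hasDerivWithinAt_comp_lineMap {f : E → ℝ} {f' : E →L[ℝ] ℝ} {r : ℝ} (hs : Convex ℝ s)
    (hy : y ∈ s) (hz : z ∈ s) (hf : HasFDerivWithinAt f f' s (AffineMap.lineMap y z r)) :
    HasDerivWithinAt (fun r : ℝ => f (AffineMap.lineMap y z r)) (f' (z - y)) (Icc 0 1) r :=
  hf.comp_hasDerivWithinAt r AffineMap.hasDerivWithinAt_lineMap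
    fun _ hr => hs.lineMap_mem hy hz hr

lemma convexOn_add_hasFDerivWithinAt_le {f : E → ℝ} {f' : E →L[ℝ] ℝ} (hf : ConvexOn ℝ s f)
    (hy : y ∈ s) (hz : z ∈ s) (hf' : HasFDerivWithinAt f f' s y) :
    f y + f' (z - y) ≤ f z := by
  have hline : ConvexOn ℝ (Icc 0 1) fun r : ℝ => f (AffineMap.lineMap y z r) :=
    (hf.comp_affineMap (AffineMap.lineMap y z)).subset
      (fun _ hr => hf.1.lineMap_mem hy hz hr) (convex_Icc 0 1)
  have hderiv : HasDerivWithinAt (fun r : ℝ => f (AffineMap.lineMap y z r)) (f' (z - y))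
      (Icc 0 1) 0 :=
    hasDerivWithinAt_comp_lineMap hf.1 hy hz (by simpa using hf')
  have hslope := hline.le_slope_of_hasDerivWithinAt (left_mem_Icc.2 zero_le_one)
    (right_mem_Icc.2 zero_le_one) zero_lt_one hderiv
  simp only [slope_def_field, AffineMap.lineMap_apply_one, AffineMap.lineMap_apply_zero, sub_zero,
    div_one] at hslope
  linarith

lemma le_add_fderiv_add_half_mul_norm_sq_of_lipschitz {L : ℝ} {f : E → ℝ} {f' : E → E →L[ℝ] ℝ}
    (hs : Convex ℝ s) (hf : ∀ w ∈ s, HasFDerivWithinAt f (f' w) s w) (hy : y ∈ s) (hz : z ∈ s)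
    (hLip : ∀ w ∈ s, ‖f' w - f' y‖ ≤ L * ‖w - y‖) :
    f z ≤ f y + f' y (z - y) + L / 2 * ‖z - y‖ ^ 2 := by
  -- On the segment from `y` to `z`, the derivative of the quadratic model dominates that of `f`.
  have hmem : ∀ r ∈ Icc (0 : ℝ) 1, AffineMap.lineMap y z r ∈ s :=
    fun r hr => hs.lineMap_mem hy hz hr
  have hderiv : ∀ r ∈ Icc (0 : ℝ) 1, HasDerivWithinAt (fun r : ℝ => f (AffineMap.lineMap y z r))
      (f' (AffineMap.lineMap y z r) (z - y)) (Icc 0 1) r :=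
    fun r hr => hasDerivWithinAt_comp_lineMap hs hy hz (hf _ (hmem r hr))
  have hmodel : ∀ r : ℝ, HasDerivAt
      (fun r : ℝ => f y + r * f' y (z - y) + r ^ 2 * (L / 2 * ‖z - y‖ ^ 2))
      (f' y (z - y) + r * L * ‖z - y‖ ^ 2) r := by
    intro r
    refine ((((hasDerivAt_id r).mul_const _).const_add _).add
      (((hasDerivAt_id r).pow 2).mul_const _)).congr_deriv ?_
    simp only [id_eq]
    ring
  have hle : ∀ r ∈ Ico (0 : ℝ) 1,
      f' (AffineMap.lineMap y z r) (z - y) ≤ f' y (z - y) + r * L * ‖z - y‖ ^ 2 := by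
    intro r hr
    have hnorm : ‖AffineMap.lineMap y z r - y‖ = r * ‖z - y‖ := by
      rw [← dist_eq_norm, dist_lineMap_left, Real.norm_of_nonneg hr.1, dist_eq_norm']
    rw [← sub_le_iff_le_add', ← sub_apply]
    calc (f' (AffineMap.lineMap y z r) - f' y) (z - y)
        ≤ ‖f' (AffineMap.lineMap y z r) - f' y‖ * ‖z - y‖ :=
          (Real.le_norm_self _).trans (ContinuousLinearMap.le_opNorm _ _)
      _ ≤ L * ‖AffineMap.lineMap y z r - y‖ * ‖z - y‖ := by
          gcongr
          exact hLip _ (hmem r (Ico_subset_Icc_self hr))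
      _ = r * L * ‖z - y‖ ^ 2 := by rw [hnorm]; ring
  have hbound := image_le_of_deriv_right_le_deriv_boundary
    (fun r hr => (hderiv r hr).continuousWithinAt)
    (fun r hr => (hderiv r (Ico_subset_Icc_self hr)).mono_of_mem_nhdsWithin
      (Icc_mem_nhdsGE_of_mem hr))
    (by simp) (fun r _ => (hmodel r).continuousAt.continuousWithinAt)
    (fun r _ => (hmodel r).hasDerivWithinAt) hle (right_mem_Icc.2 zero_le_one)
  simpa using hbound

lemma uniformConvexOn_add_modulus_le_of_isMinOn {ψ : ℝ → ℝ} {h : E → ℝ} {q : E}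
    (hh : UniformConvexOn s ψ h) (hq : q ∈ s) (hmin : IsMinOn h s q) (hz : z ∈ s) :
    h q + ψ ‖z - q‖ ≤ h z := by
  -- Compare `q` with `r • z + (1 - r) • q`, divide by `r`, and let `r` tend to `0`.
  have hsegment : ∀ r ∈ Ioo (0 : ℝ) 1, h q + (1 - r) * ψ ‖z - q‖ ≤ h z := by
    intro r hr
    have hr' : 0 ≤ 1 - r := sub_nonneg.2 hr.2.le
    have hconv := hh.2 hz hq hr.1.le hr' (add_sub_cancel r 1)
    have hle := isMinOn_iff.1 hmin _ (hh.1 hz hq hr.1.le hr' (add_sub_cancel r 1))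
    simp only [smul_eq_mul] at hconv
    refine le_of_mul_le_mul_left ?_ hr.1
    linarith
  have hlim : Filter.Tendsto (fun r : ℝ => h q + (1 - r) * ψ ‖z - q‖)
      (nhdsWithin 0 (Ioi 0)) (nhds (h q + (1 - 0) * ψ ‖z - q‖)) :=
    (Continuous.tendsto (by fun_prop) 0).mono_left nhdsWithin_le_nhds
  simpa using le_of_tendsto hlim (Filter.eventually_of_mem (Ioo_mem_nhdsGT zero_lt_one) hsegment)

/-- The basic inequality of the proximal gradient method, for a step from `y` to `q` on the
objective `F` over the feasible set `s`. It is all that the analysis of the accelerated method uses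
about a step. -/
def ProxDecrease (F : E → ℝ) (L : ℝ) (s : Set E) (y q : E) : Prop :=
  ∀ z ∈ s, F q + L / 2 * ‖z - q‖ ^ 2 ≤ F z + L / 2 * ‖z - y‖ ^ 2

/-- The Lyapunov function of the accelerated method with parameters `t` and iterates `x`, relative
to the comparison point `b`; its `i`-th value involves `x i` and `x (i + 1)`. -/
noncomputable def fistaEnergy (F : E → ℝ) (L : ℝ) (t : ℕ → ℝ) (x : ℕ → E) (b : E) (i : ℕ) : ℝ :=
  t i ^ 2 * (F (x (i + 1)) - F b) + L / 2 * ‖t i • x (i + 1) - (t i - 1) • x i - b‖ ^ 2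

section Energy

variable {F : E → ℝ} {L : ℝ} {a b : E}

lemma norm_smul_sub_smul_sub_sq {τ : ℝ} (hτ : τ ≠ 0) (a b w : E) :
    ‖τ • w - (τ - 1) • a - b‖ ^ 2 = τ ^ 2 * ‖(1 - τ⁻¹) • a + τ⁻¹ • b - w‖ ^ 2 := by
  have hsmul : τ • w - (τ - 1) • a - b = -(τ • ((1 - τ⁻¹) • a + τ⁻¹ • b - w)) := by
    match_scalars <;> field_simp
  rw [hsmul, norm_neg, norm_smul, mul_pow, Real.norm_eq_abs, sq_abs]

lemma ProxDecrease.sq_mul_sub_add_le {q : E} {τ : ℝ} (h : ProxDecrease F L s y q)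
    (hF : ConvexOn ℝ s F) (hτ : 1 ≤ τ) (ha : a ∈ s) (hb : b ∈ s) :
    τ ^ 2 * (F q - F b) + L / 2 * ‖τ • q - (τ - 1) • a - b‖ ^ 2
      ≤ (τ ^ 2 - τ) * (F a - F b) + L / 2 * ‖τ • y - (τ - 1) • a - b‖ ^ 2 := by
  have hτ0 : 0 < τ := one_pos.trans_le hτ
  have hweight : 0 ≤ 1 - τ⁻¹ := sub_nonneg.2 (inv_le_one_of_one_le₀ hτ)
  have hinv : 0 ≤ τ⁻¹ := inv_nonneg.2 hτ0.le
  have hsum : 1 - τ⁻¹ + τ⁻¹ = 1 := sub_add_cancel 1 _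
  set z := (1 - τ⁻¹) • a + τ⁻¹ • b with hz_def
  have hstep : F q + L / 2 * ‖z - q‖ ^ 2 ≤ F z + L / 2 * ‖z - y‖ ^ 2 :=
    h z (hF.1 ha hb hweight hinv hsum)
  have hconv : F z ≤ (1 - τ⁻¹) * F a + τ⁻¹ * F b := hF.2 ha hb hweight hinv hsum
  rw [norm_smul_sub_smul_sub_sq hτ0.ne', norm_smul_sub_smul_sub_sq hτ0.ne', ← hz_def]
  calc τ ^ 2 * (F q - F b) + L / 2 * (τ ^ 2 * ‖z - q‖ ^ 2)
      = τ ^ 2 * (F q + L / 2 * ‖z - q‖ ^ 2 - F b) := by ring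
    _ ≤ τ ^ 2 * ((1 - τ⁻¹) * F a + τ⁻¹ * F b + L / 2 * ‖z - y‖ ^ 2 - F b) :=
        mul_le_mul_of_nonneg_left (by linarith) (sq_nonneg τ)
    _ = (τ ^ 2 - τ) * (F a - F b) + L / 2 * (τ ^ 2 * ‖z - y‖ ^ 2) := by
        field_simp
        ring

variable {t : ℕ → ℝ} {x y : ℕ → E}

lemma fistaEnergy_zero_le (hstep : ProxDecrease F L s (y 0) (x 1)) (ht0 : t 0 = 1) (hb : b ∈ s) :
    fistaEnergy F L t x b 0 ≤ L / 2 * ‖y 0 - b‖ ^ 2 := by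
  have hle := hstep b hb
  simp only [fistaEnergy, ht0, one_pow, one_mul, one_smul, sub_self, zero_smul, sub_zero, zero_add]
  rw [norm_sub_rev (x 1), norm_sub_rev (y 0)]
  linarith

lemma smul_momentum_sub {τ τ' : ℝ} (hτ' : τ' ≠ 0) (u v : E) :
    τ' • (v + ((τ - 1) / τ') • (v - u)) - (τ' - 1) • v = τ • v - (τ - 1) • u := by
  rw [smul_add, smul_smul, mul_div_cancel₀ _ hτ']
  module

lemma fistaEnergy_succ_le {i : ℕ} (hF : ConvexOn ℝ s F)
    (hstep : ProxDecrease F L s (y (i + 1)) (x (i + 2)))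
    (hy : y (i + 1) = x (i + 1) + ((t i - 1) / t (i + 1)) • (x (i + 1) - x i))
    (ht1 : 1 ≤ t (i + 1)) (ht : t (i + 1) ^ 2 - t (i + 1) = t i ^ 2)
    (hx : x (i + 1) ∈ s) (hb : b ∈ s) :
    fistaEnergy F L t x b (i + 1) ≤ fistaEnergy F L t x b i := by
  have hle := hstep.sq_mul_sub_add_le hF ht1 hx hb
  rwa [hy, smul_momentum_sub (one_pos.trans_le ht1).ne', ht] at hle

lemma fista_sq_mul_sub_le (hL : 0 ≤ L) (hF : ConvexOn ℝ s F)
    (hstep : ∀ i, ProxDecrease F L s (y i) (x (i + 1)))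
    (hy : ∀ i, y (i + 1) = x (i + 1) + ((t i - 1) / t (i + 1)) • (x (i + 1) - x i))
    (ht0 : t 0 = 1) (ht1 : ∀ i, 1 ≤ t (i + 1)) (ht : ∀ i, t (i + 1) ^ 2 - t (i + 1) = t i ^ 2)
    (hx : ∀ i, x (i + 1) ∈ s) (hb : b ∈ s) (n : ℕ) :
    t n ^ 2 * (F (x (n + 1)) - F b) ≤ L / 2 * ‖y 0 - b‖ ^ 2 := by
  have hanti : Antitone (fistaEnergy F L t x b) := antitone_nat_of_succ_le fun i =>
    fistaEnergy_succ_le hF (hstep (i + 1)) (hy i) (ht1 i) (ht i) (hx i) hb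
  calc t n ^ 2 * (F (x (n + 1)) - F b)
      ≤ fistaEnergy F L t x b n := le_add_of_nonneg_right (by positivity)
    _ ≤ fistaEnergy F L t x b 0 := hanti n.zero_le
    _ ≤ L / 2 * ‖y 0 - b‖ ^ 2 := fistaEnergy_zero_le (hstep 0) ht0 hb

end Energy

end NormedSpace

section ProximalStep

variable {E : Type*} [NormedAddCommGroup E] [InnerProductSpace ℝ E] {L : ℝ} {f φ : E → ℝ}
  {f' : E → E} {s : Set E} {y q : E}

/-- The model of `f + φ` around `y` whose minimizers are the proximal gradient steps from `y`; the
vector field `f'` plays the role of the gradient of `f`. -/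
noncomputable def proxGradModel (L : ℝ) (f : E → ℝ) (f' : E → E) (φ : E → ℝ) (y z : E) : ℝ :=
  f y + ⟪f' y, z - y⟫ + L / 2 * ‖z - y‖ ^ 2 + φ z

lemma strongConvexOn_proxGradModel (L : ℝ) (f : E → ℝ) (f' : E → E) (y : E)
    (hφ : ConvexOn ℝ s φ) : StrongConvexOn s L (proxGradModel L f f' φ y) := by
  rw [strongConvexOn_iff_convex]
  have haffine : (fun z => proxGradModel L f f' φ y z - L / 2 * ‖z‖ ^ 2) = fun z =>
      φ z + innerSL ℝ (f' y - L • y) z + (f y - ⟪f' y, y⟫ + L / 2 * ‖y‖ ^ 2) := by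
    funext z
    simp only [proxGradModel, innerSL_apply_apply, norm_sub_sq_real, inner_sub_left,
      inner_sub_right, real_inner_smul_left, real_inner_comm z y]
    ring
  rw [haffine]
  exact (hφ.add ((innerSL ℝ (f' y - L • y)).toLinearMap.convexOn hφ.1)).add_const _

lemma proxDecrease_of_isMinOn_proxGradModel (hf : ConvexOn ℝ univ f)
    (hgrad : ∀ z : E, HasFDerivAt f (innerSL ℝ (f' z)) z)
    (hLip : ∀ z : E, ‖f' z - f' y‖ ≤ L * ‖z - y‖) (hφ : ConvexOn ℝ s φ) (hq : q ∈ s)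
    (hmin : IsMinOn (proxGradModel L f f' φ y) s q) : ProxDecrease (f + φ) L s y q := by
  intro z hz
  have hdescent : f q ≤ f y + ⟪f' y, q - y⟫ + L / 2 * ‖q - y‖ ^ 2 :=
    le_add_fderiv_add_half_mul_norm_sq_of_lipschitz convex_univ
      (fun w _ => (hgrad w).hasFDerivWithinAt) (mem_univ y) (mem_univ q) fun w _ => by
        rw [← map_sub, innerSL_apply_norm]
        exact hLip w
  have hgradient : f y + ⟪f' y, z - y⟫ ≤ f z :=
    convexOn_add_hasFDerivWithinAt_le hf (mem_univ y) (mem_univ z) (hgrad y).hasFDerivWithinAt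
  have hgrowth : proxGradModel L f f' φ y q + L / 2 * ‖z - q‖ ^ 2 ≤ proxGradModel L f f' φ y z :=
    uniformConvexOn_add_modulus_le_of_isMinOn (strongConvexOn_proxGradModel L f f' y hφ) hq hmin hz
  simp only [proxGradModel] at hgrowth
  simp only [Pi.add_apply]
  linarith

end ProximalStep

section Parameter

/-- The FISTA parameter that follows `τ`: the positive root of `ρ² - ρ = τ²`. -/
noncomputable def fistaNext (τ : ℝ) : ℝ :=
  (1 + √(1 + 4 * τ ^ 2)) / 2

lemma fistaNext_sq_sub_self (τ : ℝ) : fistaNext τ ^ 2 - fistaNext τ = τ ^ 2 := by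
  have hsqrt : √(1 + 4 * τ ^ 2) ^ 2 = 1 + 4 * τ ^ 2 := Real.sq_sqrt (by positivity)
  rw [fistaNext]
  linarith

lemma add_half_le_fistaNext (τ : ℝ) : τ + 1 / 2 ≤ fistaNext τ := by
  have hsqrt : 2 * τ ≤ √(1 + 4 * τ ^ 2) := Real.le_sqrt_of_sq_le (by linarith)
  rw [fistaNext]
  linarith

lemma add_two_div_two_le_fista_parameter {t : ℕ → ℝ} (ht0 : 1 ≤ t 0)
    (ht : ∀ i, t (i + 1) = fistaNext (t i)) (i : ℕ) : ((i : ℝ) + 2) / 2 ≤ t i := by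
  induction i with
  | zero => simpa using ht0
  | succ k ih =>
    have hstep := add_half_le_fistaNext (t k)
    rw [ht k]
    push_cast
    linarith

end Parameter

/-- Taking `s` to be the effective domain of `φ` covers extended-valued `φ`. -/
theorem fpgm_cost_bound_general {E : Type*} [NormedAddCommGroup E] [InnerProductSpace ℝ E]
    {L : ℝ} (hL : 0 ≤ L) {f : E → ℝ} {f' : E → E} {φ : E → ℝ} {s : Set E}
    (hf : ConvexOn ℝ univ f) (hgrad : ∀ z : E, HasFDerivAt f (innerSL ℝ (f' z)) z)
    (hLip : ∀ u v : E, ‖f' u - f' v‖ ≤ L * ‖u - v‖) (hφ : ConvexOn ℝ s φ)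
    {b : E} (hb : b ∈ s) {R : ℝ} {t : ℕ → ℝ} (ht0 : t 0 = 1)
    (ht : ∀ i, t (i + 1) = fistaNext (t i)) {x y : ℕ → E} (hR : ‖x 0 - b‖ ≤ R) (hy0 : y 0 = x 0)
    (hxs : ∀ i, x (i + 1) ∈ s)
    (hx : ∀ i, IsMinOn (proxGradModel L f f' φ (y i)) s (x (i + 1)))
    (hy : ∀ i, y (i + 1) = x (i + 1) + ((t i - 1) / t (i + 1)) • (x (i + 1) - x i))
    {N : ℕ} (hN : 1 ≤ N) :
    f (x N) + φ (x N) - (f b + φ b) ≤ L * R ^ 2 / (2 * t (N - 1) ^ 2) ∧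
      L * R ^ 2 / (2 * t (N - 1) ^ 2) ≤ 2 * L * R ^ 2 / ((N : ℝ) + 1) ^ 2 := by
  obtain ⟨n, rfl⟩ := Nat.exists_eq_add_of_le' hN
  rw [Nat.add_sub_cancel]
  have hgrowth : ∀ i : ℕ, ((i : ℝ) + 2) / 2 ≤ t i :=
    add_two_div_two_le_fista_parameter ht0.ge ht
  have hone : ∀ i, 1 ≤ t i := fun i => by
    linarith [hgrowth i, (Nat.cast_nonneg i : (0 : ℝ) ≤ i)]
  have hpos : 0 < t n := one_pos.trans_le (hone n)
  have hrel : ∀ i, t (i + 1) ^ 2 - t (i + 1) = t i ^ 2 := fun i => by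
    rw [ht i, fistaNext_sq_sub_self]
  have hstep : ∀ i, ProxDecrease (f + φ) L s (y i) (x (i + 1)) := fun i =>
    proxDecrease_of_isMinOn_proxGradModel hf hgrad (fun z => hLip z (y i)) hφ (hxs i) (hx i)
  have hF : ConvexOn ℝ s (f + φ) := (hf.subset (subset_univ s) hφ.1).add hφ
  constructor
  · have hR2 : L / 2 * ‖y 0 - b‖ ^ 2 ≤ L / 2 * R ^ 2 := by
      rw [hy0]
      gcongr
    have hcost : t n ^ 2 * (f (x (n + 1)) + φ (x (n + 1)) - (f b + φ b)) ≤ L / 2 * R ^ 2 :=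
      (fista_sq_mul_sub_le hL hF hstep hy ht0 (fun i => hone (i + 1)) hrel hxs hb n).trans hR2
    rw [le_div_iff₀ (by positivity)]
    linarith
  · calc L * R ^ 2 / (2 * t n ^ 2)
        ≤ L * R ^ 2 / (2 * (((n : ℝ) + 2) / 2) ^ 2) := by
          gcongr
          exact hgrowth n
      _ = 2 * L * R ^ 2 / (((n + 1 : ℕ) : ℝ) + 1) ^ 2 := by
          push_cast
          field_simp
          ring

/-- FPGM (FISTA) satisfies, for every N ≥ 1,
F(x_N) − F(x_*) ≤ LR²/(2t_{N−1}²) ≤ 2LR²/(N+1)². -/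
theorem fpgm_cost_bound
    {E : Type*} [NormedAddCommGroup E] [InnerProductSpace ℝ E]
    (L : ℝ) (hL : 0 < L)
    (f : E → ℝ) (f' : E → E) (φ : E → ℝ)
    (hf : ConvexOn ℝ Set.univ f)
    (hgrad : ∀ z : E, HasFDerivAt f (innerSL ℝ (f' z)) z)
    (hLip : ∀ u v : E, ‖f' u - f' v‖ ≤ L * ‖u - v‖)
    (hφ : ConvexOn ℝ Set.univ φ)
    (p : E → E)
    (hp : ∀ y : E, IsMinOn
      (fun z => f y + ⟪f' y, z - y⟫ + L / 2 * ‖z - y‖ ^ 2 + φ z) Set.univ (p y))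
    (xs : E) (hxs : IsMinOn (fun z => f z + φ z) Set.univ xs)
    (R : ℝ) (hR0 : 0 ≤ R)
    (t : ℕ → ℝ) (ht0 : t 0 = 1)
    (ht : ∀ i, t (i + 1) = (1 + Real.sqrt (1 + 4 * t i ^ 2)) / 2)
    (x y : ℕ → E) (hR : ‖x 0 - xs‖ ≤ R)
    (hy0 : y 0 = x 0)
    (hx : ∀ i, x (i + 1) = p (y i))
    (hy : ∀ i, y (i + 1) = x (i + 1) + ((t i - 1) / t (i + 1)) • (x (i + 1) - x i))
    (N : ℕ) (hN : 1 ≤ N) :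
    f (x N) + φ (x N) - (f xs + φ xs) ≤ L * R ^ 2 / (2 * t (N - 1) ^ 2) ∧
      L * R ^ 2 / (2 * t (N - 1) ^ 2) ≤ 2 * L * R ^ 2 / ((N : ℝ) + 1) ^ 2 :=
  fpgm_cost_bound_general hL.le hf hgrad hLip hφ (mem_univ xs) ht0 ht hR hy0
    (fun _ => mem_univ _) (fun i => hx i ▸ hp (y i)) hy hN
end
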